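/- Let q ≥ 3 and let x, y ∈ ℝ each admit an infinite regular λ_q-CF. Then x and y are G_q-equivalent if and only if one of the following holds: (i) x and y admit infinite regular λ_q-CF expansions whose digit sequences have a common tail; (ii) x admits an infinite regular λ_q-CF expansion whose digit sequence has a common tail with ρ_q and y admits one whose digit sequence has a common tail with −ρ_q; (iii) the same as (ii) with the roles of x and y interchanged. -/

import Mathlib

open Filter Topology

/-- `λ_q = 2 cos (π/q)`. -/
noncomputable def lamq (q : ℕ) : ℝ := 2 * Real.cos (Real.pi / q)

/-- `h_q = (q-2)/2` for even `q` and `(q-3)/2` for odd `q`. -/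
def hQ (q : ℕ) : ℕ := if Even q then (q - 2) / 2 else (q - 3) / 2

/-- Forbidden blocks for the nearest `λ_q`-multiple continued fractions.
For `ε ∈ {1,-1}`: the block `(ε)^{h_q+1}`; for even `q` the blocks `((ε)^{h_q}, ε·m)`, `m ≥ 1`;
for odd `q` (including `q = 3`, where `h_q = 0`) the blocks `((ε)^{h_q}, ε·2, (ε)^{h_q}, ε·m)`,
`m ≥ 1`. -/
def IsForbidden (q : ℕ) (L : List ℤ) : Prop :=
  ∃ ε : ℤ, (ε = 1 ∨ ε = -1) ∧
    (L = List.replicate (hQ q + 1) ε ∨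
      (if Even q then
        ∃ m : ℤ, 1 ≤ m ∧ L = List.replicate (hQ q) ε ++ [ε * m]
      else
        ∃ m : ℤ, 1 ≤ m ∧
          L = List.replicate (hQ q) ε ++ ε * 2 :: (List.replicate (hQ q) ε ++ [ε * m])))

/-- An infinite sequence is `q`-regular if no finite subblock is forbidden. -/
def RegularSeq (q : ℕ) (a : ℕ → ℤ) : Prop :=
  ∀ (l len : ℕ), ¬ IsForbidden q (List.ofFn fun j : Fin len => a (l + (j : ℕ)))

/-- An infinite sequence is dual `q`-regular if no reversed finite subblock is forbidden. -/
def DualRegularSeq (q : ℕ) (a : ℕ → ℤ) : Prop :=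
  ∀ (l len : ℕ), ¬ IsForbidden q (List.ofFn fun j : Fin len => a (l + (j : ℕ))).reverse

/-- A finite sequence is `q`-regular if no contiguous subblock is forbidden. -/
def RegularList (q : ℕ) (L : List ℤ) : Prop :=
  ∀ B : List ℤ, B <:+: L → ¬ IsForbidden q B

/-- Numerators of the convergents: `p₀ = a₀λ`, `p₁ = a₁λ·p₀ - 1`,
`pₙ = aₙλ·pₙ₋₁ - pₙ₋₂` (so that `p₋₁ = 1`, `p₋₂ = 0`).  Here `A n` is the digit `aₙ`. -/
noncomputable def cfP (lam : ℝ) (A : ℕ → ℤ) : ℕ → ℝ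
  | 0 => (A 0 : ℝ) * lam
  | 1 => (A 1 : ℝ) * lam * ((A 0 : ℝ) * lam) - 1
  | (n + 2) => (A (n + 2) : ℝ) * lam * cfP lam A (n + 1) - cfP lam A n

/-- Denominators of the convergents: `q₀ = 1`, `q₁ = a₁λ`,
`qₙ = aₙλ·qₙ₋₁ - qₙ₋₂` (so that `q₋₁ = 0`, `q₋₂ = -1`). -/
noncomputable def cfQ (lam : ℝ) (A : ℕ → ℤ) : ℕ → ℝ
  | 0 => 1
  | 1 => (A 1 : ℝ) * lam
  | (n + 2) => (A (n + 2) : ℝ) * lam * cfQ lam A (n + 1) - cfQ lam A n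

/-- The λ-continued fraction with digit sequence `A` converges to `x`. -/
def CFConvergesTo (lam : ℝ) (A : ℕ → ℤ) (x : ℝ) : Prop :=
  (∀ n, cfQ lam A n ≠ 0) ∧
    Filter.Tendsto (fun n => cfP lam A n / cfQ lam A n) Filter.atTop (nhds x)

/-- The value `p_L/q_L` of the finite continued fraction `[a₀; a₁, …, a_L]`. -/
noncomputable def cfValList (lam : ℝ) (a0 : ℤ) (L : List ℤ) : ℝ :=
  cfP lam (fun i => (a0 :: L).getD i 0) L.length /
    cfQ lam (fun i => (a0 :: L).getD i 0) L.length

/-- The last denominator `q_L` of the finite continued fraction `[a₀; a₁, …, a_L]`. -/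
noncomputable def cfDenList (lam : ℝ) (a0 : ℤ) (L : List ℤ) : ℝ :=
  cfQ lam (fun i => (a0 :: L).getD i 0) L.length

/-- The modified floor: `⌊t⌋* = ⌈t⌉ - 1` for `t > 0` and `⌊t⌋* = ⌊t⌋` for `t ≤ 0`. -/
noncomputable def floorstar (t : ℝ) : ℤ := if 0 < t then ⌈t⌉ - 1 else ⌊t⌋

/-- The nearest `λ`-multiple: `⟨y⟩ = ⌊y/λ + 1/2⌋*`. -/
noncomputable def nearestLam (lam : ℝ) (x : ℝ) : ℤ := floorstar (x / lam + 1 / 2)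

/-- The interval map `f_q` on `I_q = [-λ/2, λ/2]`. -/
noncomputable def fq (lam : ℝ) (x : ℝ) : ℝ :=
  if x = 0 then 0 else -1 / x - (nearestLam lam (-1 / x) : ℝ) * lam

/-- `R_q`: equal to `1` for even `q`, and the positive root of `R² + (2-λ_q)R = 1` for odd `q`. -/
noncomputable def Rq (q : ℕ) : ℝ :=
  if Even q then 1 else (lamq q - 2 + Real.sqrt ((2 - lamq q) ^ 2 + 4)) / 2

/-- `r_q = R_q - λ_q`. -/
noncomputable def rq (q : ℕ) : ℝ := Rq q - lamq q

/-- The map `⟨·⟩*` used by the dual algorithm. -/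
noncomputable def nearestDual (lam R y : ℝ) : ℤ :=
  if 0 ≤ y then floorstar (y / lam + 1 - R / lam) else floorstar (y / lam + R / lam)

/-- The dual interval map `f_q^*` on `I_{R_q} = [-R_q, R_q]`. -/
noncomputable def fqstar (lam R : ℝ) (x : ℝ) : ℝ :=
  if x = 0 then 0 else -1 / x - (nearestDual lam R (-1 / x) : ℝ) * lam

/-- The matrix `S = [[0,-1],[1,0]]` as an element of `SL(2,ℝ)`. -/
noncomputable def matS : Matrix.SpecialLinearGroup (Fin 2) ℝ :=
  ⟨!![0, -1; 1, 0], by norm_num [Matrix.det_fin_two_of]⟩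

/-- The matrix `T = [[1,λ],[0,1]]` as an element of `SL(2,ℝ)`. -/
noncomputable def matT (lam : ℝ) : Matrix.SpecialLinearGroup (Fin 2) ℝ :=
  ⟨!![1, lam; 0, 1], by norm_num [Matrix.det_fin_two_of]⟩

/-- The Hecke triangle group `G_q`, the subgroup of `SL(2,ℝ)` generated by `S` and `T_q`. -/
noncomputable def Hecke (q : ℕ) : Subgroup (Matrix.SpecialLinearGroup (Fin 2) ℝ) :=
  Subgroup.closure {matS, matT (lamq q)}

/-- The Möbius action of `g` on `x ∈ ℝ`. -/
noncomputable def moeb (g : Matrix.SpecialLinearGroup (Fin 2) ℝ) (x : ℝ) : ℝ :=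
  (g.val 0 0 * x + g.val 0 1) / (g.val 1 0 * x + g.val 1 1)

/-- `x` and `y` are `G_q`-equivalent. -/
def GqEquiv (q : ℕ) (x y : ℝ) : Prop :=
  ∃ g ∈ Hecke q, (g.val 1 0 * x + g.val 1 1 ≠ 0) ∧ moeb g x = y

/-- Two sequences have a common tail. -/
def CommonTail (a b : ℕ → ℤ) : Prop := ∃ m n : ℕ, ∀ k : ℕ, a (m + k) = b (n + k)

/-- The period block of `ρ_q`: `(3)` for `q = 3`, `((1)^{h_q-1}, 2)` for even `q`
and `((1)^{h_q}, 2, (1)^{h_q-1}, 2)` for odd `q ≥ 5`. -/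
def rhoBlock (q : ℕ) : List ℤ :=
  if q = 3 then [3]
  else if Even q then List.replicate (hQ q - 1) 1 ++ [2]
  else List.replicate (hQ q) 1 ++ 2 :: (List.replicate (hQ q - 1) 1 ++ [2])

/-- The periodic sequence `ρ_q`. -/
def rho (q : ℕ) (i : ℕ) : ℤ := (rhoBlock q).getD (i % (rhoBlock q).length) 0

/-- `x` has the infinite regular `λ_q`-CF with digit sequence `A` (with `A 0 = a₀`). -/
def HasRegCF (q : ℕ) (x : ℝ) (A : ℕ → ℤ) : Prop :=
  (∀ i, A (i + 1) ≠ 0) ∧ RegularSeq q (fun i => A (i + 1)) ∧ CFConvergesTo (lamq q) A x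

/-- `x` has the infinite dual regular `λ_q`-CF with digit sequence `A` (with `A 0 = a₀`). -/
def HasDualRegCF (q : ℕ) (x : ℝ) (A : ℕ → ℤ) : Prop :=
  (∀ i, A (i + 1) ≠ 0) ∧ DualRegularSeq q (fun i => A (i + 1)) ∧ CFConvergesTo (lamq q) A x

/-- The digits of `x` produced by the algorithm for `f_q`: `a_{i+1} = ⟨-1 / f_q^i(x)⟩`. -/
noncomputable def digitSeq (lam : ℝ) (x : ℝ) : ℕ → ℤ :=
  fun i => nearestLam lam (-1 / (fq lam)^[i] x)

/-- The digits of `x` produced by the algorithm for `f_q^*`: `b_{i+1} = ⟨-1 / (f_q^*)^i(x)⟩*`. -/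
noncomputable def digitSeqStar (lam R : ℝ) (x : ℝ) : ℕ → ℤ :=
  fun i => nearestDual lam R (-1 / (fqstar lam R)^[i] x)

/-!
A lexicographic comparison of digit words shows that the finite tails of a regular expansion lie in
`[-λ/2, λ/2]`, with `λ = λ_q`, so a regular expansion is a nearest-multiple-of-`λ` expansion. These
are unique, and a digit sequence determines its point because the Gauss map expands. Hence having
expansions with a common tail, or with tails that both lie in `{ρ_q, -ρ_q}`, is an equivalence
relation on points, and it suffices to see that it is invariant under the generators of `G_q`.

Translation by `λ` only changes the leading digit, and `S : x ↦ -1/x` drops or adds a digit `0` when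
`|x| ≤ λ/2` or `|x| ≥ 2/λ`. In between, an elliptic element of order `q` shows that
complementary blocks of ones can be read off `x` and `1/x`, after which the remaining points are
again inverse to each other. A counterexample to the `S`-invariance would thus stay a counterexample
under iteration of an expanding map, so it can only be the fixed point `R_q`. But `R_q` has the tail
of `ρ_q`, so `R_q` and `-1/R_q` are related. Conversely, reading off digits acts by elements of
`G_q`, and `R_q` and `-R_q` are `G_q`-equivalent.
-/

/-! ## Entries of the powers of the elliptic generator -/

/-- `sinRatio q k = sin (kπ/q) / sin (π/q)`, the value at `cos (π/q)` of the Chebyshev polynomial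
`U_{k-1}`. These are the entries of the powers of the elliptic generator of order `q`. -/
noncomputable def sinRatio (q k : ℕ) : ℝ :=
  Real.sin (k * (Real.pi / q)) / Real.sin (Real.pi / q)

section SinRatio

variable {q : ℕ}

lemma sin_natCast_mul_pi_div_pos {k : ℕ} (hk : 0 < k) (hkq : k < q) :
    0 < Real.sin (k * (Real.pi / q)) := by
  have hq0 : (0 : ℝ) < q := by exact_mod_cast hk.trans hkq
  apply Real.sin_pos_of_pos_of_lt_pi (by positivity)
  rw [← mul_div_assoc, div_lt_iff₀ hq0, mul_comm]
  gcongr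

lemma sin_pi_div_pos (hq : 3 ≤ q) : 0 < Real.sin (Real.pi / q) := by
  simpa using sin_natCast_mul_pi_div_pos (k := 1) one_pos (by omega : 1 < q)

lemma sinRatio_zero : sinRatio q 0 = 0 := by simp [sinRatio]

lemma sinRatio_one (hq : 3 ≤ q) : sinRatio q 1 = 1 := by
  simp [sinRatio, (sin_pi_div_pos hq).ne']

lemma sinRatio_add_two (k : ℕ) :
    sinRatio q (k + 2) = lamq q * sinRatio q (k + 1) - sinRatio q k := by
  have hadd : ((k + 2 : ℕ) : ℝ) * (Real.pi / q) =
      ((k + 1 : ℕ) : ℝ) * (Real.pi / q) + Real.pi / q := by push_cast; ring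
  have hsub : (k : ℝ) * (Real.pi / q) =
      ((k + 1 : ℕ) : ℝ) * (Real.pi / q) - Real.pi / q := by push_cast; ring
  simp only [sinRatio, lamq]
  rw [hadd, hsub, Real.sin_add, Real.sin_sub]
  ring

lemma sinRatio_two (hq : 3 ≤ q) : sinRatio q 2 = lamq q := by
  simpa [sinRatio_zero, sinRatio_one hq] using sinRatio_add_two (q := q) 0

lemma sinRatio_pos {k : ℕ} (hq : 3 ≤ q) (hk : 0 < k) (hkq : k < q) : 0 < sinRatio q k :=
  div_pos (sin_natCast_mul_pi_div_pos hk hkq) (sin_pi_div_pos hq)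

lemma sinRatio_nonneg {k : ℕ} (hq : 3 ≤ q) (hkq : k < q) : 0 ≤ sinRatio q k := by
  rcases k.eq_zero_or_pos with rfl | hk
  · exact sinRatio_zero.ge
  · exact (sinRatio_pos hq hk hkq).le

lemma sinRatio_symm {k l : ℕ} (hq : 3 ≤ q) (hkl : k + l = q) : sinRatio q k = sinRatio q l := by
  have hq0 : (q : ℝ) ≠ 0 := by exact_mod_cast (by omega : q ≠ 0)
  have hk : (k : ℝ) * (Real.pi / q) = Real.pi - l * (Real.pi / q) := by
    rw [eq_sub_iff_add_eq, ← add_mul, ← Nat.cast_add, hkl, mul_div_cancel₀ _ hq0]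
  rw [sinRatio, hk, Real.sin_pi_sub, sinRatio]

lemma lamq_lt_two (hq : 3 ≤ q) : lamq q < 2 := by
  have hq1 : (1 : ℝ) ≤ q := by exact_mod_cast (by omega : 1 ≤ q)
  have hcos : Real.cos (Real.pi / q) < Real.cos 0 :=
    Real.cos_lt_cos_of_nonneg_of_le_pi le_rfl (div_le_self Real.pi_pos.le hq1) (by positivity)
  rw [Real.cos_zero] at hcos
  simp only [lamq]
  linarith

lemma one_le_lamq (hq : 3 ≤ q) : 1 ≤ lamq q := by
  have hq3 : (3 : ℝ) ≤ q := by exact_mod_cast hq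
  have hcos : Real.cos (Real.pi / 3) ≤ Real.cos (Real.pi / q) :=
    Real.cos_le_cos_of_nonneg_of_le_pi (by positivity) (by linarith [Real.pi_pos]) (by gcongr)
  rw [Real.cos_pi_div_three] at hcos
  simp only [lamq]
  linarith

lemma lamq_pos (hq : 3 ≤ q) : 0 < lamq q := one_pos.trans_le (one_le_lamq hq)

lemma eq_two_mul_hQ_add_two (hq : 3 ≤ q) (he : Even q) : q = 2 * hQ q + 2 := by
  rw [hQ, if_pos he]
  obtain ⟨n, rfl⟩ := he
  omega

lemma eq_two_mul_hQ_add_three (hq : 3 ≤ q) (ho : ¬ Even q) : q = 2 * hQ q + 3 := by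
  rw [hQ, if_neg ho]
  obtain ⟨n, rfl⟩ := Nat.not_even_iff_odd.1 ho
  omega

lemma exists_hQ_add_add_two_eq (hq : 3 ≤ q) : ∃ j, hQ q + j + 2 = q := by
  by_cases he : Even q
  · exact ⟨hQ q, by have := eq_two_mul_hQ_add_two hq he; omega⟩
  · exact ⟨hQ q + 1, by have := eq_two_mul_hQ_add_three hq he; omega⟩

end SinRatio

/-! ## Nearest-multiple expansions -/

/-- The complete quotients of `x` with respect to the digit sequence `A`: the `n`-th one is
`[A n; A (n + 1), …]` whenever `x = [A 0; A 1, …]`. -/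
noncomputable def completeQuotient (lam x : ℝ) (A : ℕ → ℤ) : ℕ → ℝ
  | 0 => x
  | n + 1 => (A n * lam - completeQuotient lam x A n)⁻¹

/-- `A` is the digit sequence of a nonterminating nearest-multiple-of-`lam` expansion of `x`. Ties
`|X - a * lam| = lam / 2` are allowed to be broken either way. -/
def IsNearestExpansion (lam x : ℝ) (A : ℕ → ℤ) : Prop :=
  ∀ n, |completeQuotient lam x A n - A n * lam| ≤ lam / 2 ∧
    completeQuotient lam x A n ≠ A n * lam

/-- The digit sequence `A` with `k` added to its leading digit. -/
def addHead (k : ℤ) (A : ℕ → ℤ) : ℕ → ℤ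
  | 0 => A 0 + k
  | n + 1 => A (n + 1)

/-- The digit sequence with leading digit `a` followed by `A`. -/
def consDigit (a : ℤ) (A : ℕ → ℤ) : ℕ → ℤ
  | 0 => a
  | n + 1 => A n

section NearestExpansion

variable {lam x y : ℝ} {A : ℕ → ℤ}

lemma completeQuotient_add (m n : ℕ) :
    completeQuotient lam (completeQuotient lam x A m) (fun i => A (m + i)) n =
      completeQuotient lam x A (m + n) := by
  induction n with
  | zero => rfl
  | succ n ih => rw [completeQuotient, ih]; rfl

lemma completeQuotient_tail (n : ℕ) :
    completeQuotient lam (A 0 * lam - x)⁻¹ (fun i => A (i + 1)) n =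
      completeQuotient lam x A (n + 1) := by
  simpa only [add_comm 1, completeQuotient] using completeQuotient_add (lam := lam) 1 n

lemma completeQuotient_neg (n : ℕ) :
    completeQuotient lam (-x) (fun i => -A i) n = -completeQuotient lam x A n := by
  induction n with
  | zero => rfl
  | succ n ih =>
    simp only [completeQuotient, ih, ← inv_neg]
    push_cast
    ring

lemma IsNearestExpansion.tail (h : IsNearestExpansion lam x A) (m : ℕ) :
    IsNearestExpansion lam (completeQuotient lam x A m) (fun i => A (m + i)) := fun n => by
  simpa only [completeQuotient_add] using h (m + n)

lemma IsNearestExpansion.neg (h : IsNearestExpansion lam x A) :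
    IsNearestExpansion lam (-x) (fun i => -A i) := fun n => by
  obtain ⟨hle, hne⟩ := h n
  rw [completeQuotient_neg]
  push_cast
  refine ⟨?_, fun heq => hne (by linarith)⟩
  rwa [← abs_neg, show -(-completeQuotient lam x A n - -(A n : ℝ) * lam) =
    completeQuotient lam x A n - A n * lam by ring]

lemma isNearestExpansion_iff : IsNearestExpansion lam x A ↔ |x - A 0 * lam| ≤ lam / 2 ∧
    x ≠ A 0 * lam ∧ IsNearestExpansion lam (A 0 * lam - x)⁻¹ (fun i => A (i + 1)) := by
  simp only [IsNearestExpansion, completeQuotient_tail]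
  refine ⟨fun h => ⟨(h 0).1, (h 0).2, fun n => h (n + 1)⟩, ?_⟩
  rintro ⟨hle, hne, h⟩ (_ | n)
  exacts [⟨hle, hne⟩, h n]

lemma IsNearestExpansion.cons {a : ℤ} (hle : |x - a * lam| ≤ lam / 2) (hne : x ≠ a * lam)
    (h : IsNearestExpansion lam (a * lam - x)⁻¹ A) : IsNearestExpansion lam x (consDigit a A) :=
  isNearestExpansion_iff.2 ⟨hle, hne, h⟩

lemma IsNearestExpansion.add_int_mul (h : IsNearestExpansion lam x A) (k : ℤ) :
    IsNearestExpansion lam (x + k * lam) (addHead k A) := by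
  have hsub : x + k * lam - (addHead k A 0 : ℤ) * lam = x - A 0 * lam := by
    simp only [addHead]; push_cast; ring
  rw [isNearestExpansion_iff] at h ⊢
  rw [← neg_sub _ (((addHead k A 0 : ℤ) : ℝ) * lam), ← sub_ne_zero, hsub, neg_sub, sub_ne_zero]
  exact h

lemma int_eq_of_abs_sub_mul_lt {a b : ℤ} (ha : |x - a * lam| ≤ lam / 2)
    (hb : |x - b * lam| < lam / 2) : a = b := by
  have hlam : 0 < lam := by linarith [abs_nonneg (x - b * lam)]
  have hmul : |(a - b : ℤ)| * lam < 1 * lam := by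
    rw [← abs_of_pos hlam, Int.cast_abs, ← abs_mul, abs_of_pos hlam]
    calc |((a - b : ℤ) : ℝ) * lam| = |(x - b * lam) - (x - a * lam)| := by push_cast; ring_nf
      _ ≤ |x - b * lam| + |x - a * lam| := abs_sub _ _
      _ < 1 * lam := by linarith
  have habs : |a - b| < 1 := by exact_mod_cast lt_of_mul_lt_mul_right hmul hlam.le
  exact sub_eq_zero.1 (Int.abs_lt_one_iff.1 habs)

lemma not_isNearestExpansion_zero (hlam : 0 < lam) : ¬ IsNearestExpansion lam 0 A := fun h => by
  have hA : A 0 = 0 := int_eq_of_abs_sub_mul_lt (h 0).1 (by simpa [completeQuotient] using hlam)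
  exact (h 0).2 (by simp [completeQuotient, hA])

lemma eq_zero_of_expanding {d : ℕ → ℝ} {κ M : ℝ} (hκ : 1 < κ) (hd : ∀ n, κ * |d n| ≤ |d (n + 1)|)
    (hM : ∀ n, |d n| ≤ M) : d 0 = 0 := by
  have hpow : ∀ n, κ ^ n * |d 0| ≤ |d n| := fun n => by
    induction n with
    | zero => simp
    | succ n ih =>
      rw [pow_succ', mul_assoc]
      exact (mul_le_mul_of_nonneg_left ih (by linarith)).trans (hd n)
  by_contra h0
  obtain ⟨n, hn⟩ := pow_unbounded_of_one_lt (M / |d 0|) hκ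
  rw [div_lt_iff₀ (abs_pos.2 h0)] at hn
  exact absurd (hpow n) (by linarith [hM n])

/-- The Gauss map of the expansion expands distances by at least `(2 / lam) ^ 2`. -/
lemma IsNearestExpansion.value_unique (hlam : 0 < lam) (hlam2 : lam < 2)
    (hx : IsNearestExpansion lam x A) (hy : IsNearestExpansion lam y A) : x = y := by
  set X := completeQuotient lam x A
  set Y := completeQuotient lam y A
  have hκ : 1 < (2 / lam) ^ 2 := one_lt_pow₀ ((one_lt_div hlam).2 hlam2) two_ne_zero
  refine sub_eq_zero.1 (eq_zero_of_expanding (d := fun n => X n - Y n) (M := lam) hκ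
    (fun n => ?_) (fun n => ?_))
  · obtain ⟨hxle, hxne⟩ := hx n
    obtain ⟨hyle, hyne⟩ := hy n
    have hx0 : A n * lam - X n ≠ 0 := sub_ne_zero.2 hxne.symm
    have hy0 : A n * lam - Y n ≠ 0 := sub_ne_zero.2 hyne.symm
    have hdiff : X (n + 1) - Y (n + 1) =
        (X n - Y n) * ((A n * lam - X n)⁻¹ * (A n * lam - Y n)⁻¹) := by
      rw [show X (n + 1) = (A n * lam - X n)⁻¹ from rfl,
        show Y (n + 1) = (A n * lam - Y n)⁻¹ from rfl]
      field_simp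
      ring
    have hinv : ∀ z : ℝ, z ≠ 0 → |z| ≤ lam / 2 → 2 / lam ≤ |z⁻¹| := fun z hz hzle => by
      rw [abs_inv, ← inv_div]
      exact inv_anti₀ (abs_pos.2 hz) hzle
    rw [hdiff, abs_mul, abs_mul, mul_comm, sq]
    gcongr
    · exact hinv _ hx0 (by rwa [abs_sub_comm])
    · exact hinv _ hy0 (by rwa [abs_sub_comm])
  · calc |X n - Y n| = |(X n - A n * lam) - (Y n - A n * lam)| := by ring_nf
      _ ≤ |X n - A n * lam| + |Y n - A n * lam| := abs_sub _ _
      _ ≤ lam := by linarith [(hx n).1, (hy n).1]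

end NearestExpansion

/-- `ReducesTo lam w x y`: reading the digits `w` off `x` leaves the complete quotient `y`, and
every digit read is strictly the nearest one, hence forced. -/
def ReducesTo (lam : ℝ) : List ℤ → ℝ → ℝ → Prop
  | [], x, y => x = y
  | a :: w, x, y => |x - a * lam| < lam / 2 ∧ x ≠ a * lam ∧ ReducesTo lam w (a * lam - x)⁻¹ y

section ReducesTo

variable {lam x y z : ℝ} {v w : List ℤ}

lemma ReducesTo.append (hv : ReducesTo lam v x y) (hw : ReducesTo lam w y z) :
    ReducesTo lam (v ++ w) x z := by
  induction v generalizing x with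
  | nil => exact hv.symm ▸ hw
  | cons a v ih => exact ⟨hv.1, hv.2.1, ih hv.2.2⟩

lemma ReducesTo.add_int_mul {a : ℤ} (h : ReducesTo lam (a :: w) x y) (k : ℤ) :
    ReducesTo lam ((a + k) :: w) (x + k * lam) y := by
  have hsub : x + k * lam - ((a + k : ℤ) : ℝ) * lam = x - a * lam := by push_cast; ring
  simp only [ReducesTo] at h ⊢
  rw [← neg_sub _ (((a + k : ℤ) : ℝ) * lam), ← sub_ne_zero, hsub, neg_sub, sub_ne_zero]
  exact h

lemma ReducesTo.isNearest_getD (h : ReducesTo lam w x y) {A : ℕ → ℤ}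
    (hA : ∀ i < w.length, A i = w.getD i 0) :
    (∀ i < w.length, |completeQuotient lam x A i - A i * lam| ≤ lam / 2 ∧
      completeQuotient lam x A i ≠ A i * lam) ∧ completeQuotient lam x A w.length = y := by
  induction w generalizing x A with
  | nil => exact ⟨fun i hi => absurd hi i.not_lt_zero, h⟩
  | cons a w ih =>
    obtain ⟨hlt, hne, hred⟩ := h
    have hA0 : A 0 = a := hA 0 (by simp)
    rw [← hA0] at hred
    obtain ⟨hstep, hend⟩ := ih hred (A := fun i => A (i + 1)) fun i hi => by
      simpa using hA (i + 1) (by simpa using hi)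
    simp only [completeQuotient_tail] at hstep hend
    refine ⟨?_, hend⟩
    rintro (_ | i) hi
    · rw [hA0]
      exact ⟨hlt.le, hne⟩
    · exact hstep i (by simpa using hi)

lemma ReducesTo.isNearestExpansion_periodic (hw : w ≠ []) (h : ReducesTo lam w x x) :
    IsNearestExpansion lam x (fun i => w.getD (i % w.length) 0) := by
  set A : ℕ → ℤ := fun i => w.getD (i % w.length) 0
  have hlen : 0 < w.length := List.length_pos_of_ne_nil hw
  obtain ⟨hstep, hend⟩ := h.isNearest_getD (A := A) fun i hi => by
    simp only [A, Nat.mod_eq_of_lt hi]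
  have hper : ∀ n, completeQuotient lam x A (n + w.length) = completeQuotient lam x A n :=
    fun n => by
      rw [add_comm, ← completeQuotient_add, hend]
      simp only [A, Nat.add_mod_left]
  intro n
  have hmod := hstep (n % w.length) (n.mod_lt hlen)
  rwa [Function.Periodic.map_mod_nat hper, show A (n % w.length) = A n by simp [A]] at hmod

end ReducesTo

/-! ## Blocks of ones and equivalence of tails -/

/-- The Möbius map that a block of `j` digits `1` induces on complete quotients, followed by
subtraction of `lamq q`. -/
noncomputable def onesMap (q j : ℕ) (x : ℝ) : ℝ :=
  (sinRatio q (j + 1) * x - sinRatio q (j + 2)) / (sinRatio q (j + 1) - sinRatio q j * x)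

section OnesMap

variable {q h j : ℕ} {x : ℝ}

lemma lamq_add_onesMap_zero (hq : 3 ≤ q) (x : ℝ) : lamq q + onesMap q 0 x = x := by
  simp [onesMap, sinRatio_zero, sinRatio_one hq, sinRatio_two hq]

lemma onesMap_inv_lamq_sub (hx : lamq q - x ≠ 0) :
    onesMap q j (lamq q - x)⁻¹ = onesMap q (j + 1) x := by
  have hnum : sinRatio q (j + 1) - sinRatio q (j + 2) * (lamq q - x) =
      sinRatio q (j + 2) * x - sinRatio q (j + 3) := by
    rw [sinRatio_add_two (j + 1)]; ring
  have hden : sinRatio q (j + 1) * (lamq q - x) - sinRatio q j =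
      sinRatio q (j + 2) - sinRatio q (j + 1) * x := by
    rw [sinRatio_add_two j]; ring
  simp only [onesMap, add_assoc, Nat.reduceAdd]
  rw [← hnum, ← hden]
  field_simp

lemma onesMap_eq_of_add_add_two (hq : 3 ≤ q) (hhj : h + j + 2 = q) (x : ℝ) :
    onesMap q j x = (sinRatio q (h + 1) * x - sinRatio q h) /
      (sinRatio q (h + 1) - sinRatio q (h + 2) * x) := by
  rw [onesMap, sinRatio_symm hq (by omega : j + 1 + (h + 1) = q),
    sinRatio_symm hq (by omega : j + 2 + h = q), sinRatio_symm hq (by omega : j + (h + 2) = q)]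

lemma onesMap_inv (hq : 3 ≤ q) (hhj : h + j + 2 = q) (hx : x ≠ 0) :
    onesMap q h x⁻¹ = (onesMap q j x)⁻¹ := by
  rw [onesMap_eq_of_add_add_two hq hhj, onesMap, inv_div, ← mul_div_mul_right _ _ hx]
  congr 1 <;> field_simp

lemma reducesTo_replicate_one (hq : 3 ≤ q) (hj : j < q) (hx : lamq q / 2 < x)
    (hlt : sinRatio q j * x < sinRatio q (j + 1)) :
    ReducesTo (lamq q) (List.replicate j 1) x (lamq q + onesMap q j x) := by
  induction j generalizing x with
  | zero => exact (lamq_add_onesMap_zero hq x).symm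
  | succ j ih =>
    have hlam2 := lamq_lt_two hq
    have hs : 0 < sinRatio q (j + 1) := sinRatio_pos hq j.succ_pos hj
    rw [sinRatio_add_two] at hlt
    have hxlam : x < lamq q :=
      lt_of_mul_lt_mul_left (by linarith [sinRatio_nonneg hq (by omega : j < q)]) hs.le
    have hpos : 0 < lamq q - x := by linarith
    refine ⟨?_, by simpa using hxlam.ne, ?_⟩
    · rw [abs_lt]
      push_cast
      constructor <;> linarith
    · rw [Int.cast_one, one_mul, ← onesMap_inv_lamq_sub hpos.ne']
      refine ih (by omega) ?_ ?_
      · rw [lt_inv_comm₀ (by linarith [lamq_pos hq]) hpos]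
        exact (by linarith : lamq q - x < 1).trans
          ((one_lt_inv₀ (by linarith [lamq_pos hq])).2 (by linarith))
      · rw [← div_eq_mul_inv, div_lt_iff₀ hpos]
        linarith

end OnesMap

section CommonTail

variable {q : ℕ} {A B C : ℕ → ℤ}

lemma CommonTail.refl (A : ℕ → ℤ) : CommonTail A A := ⟨0, 0, fun _ => rfl⟩

lemma CommonTail.symm : CommonTail A B → CommonTail B A
  | ⟨m, n, h⟩ => ⟨n, m, fun k => (h k).symm⟩

lemma CommonTail.trans : CommonTail A B → CommonTail B C → CommonTail A C
  | ⟨m, n, h⟩, ⟨m', n', h'⟩ => ⟨m + m', n' + n, fun k => by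
      rw [add_assoc, h, add_assoc, ← h', ← add_assoc, ← add_assoc, add_comm n]⟩

lemma CommonTail.neg : CommonTail A B → CommonTail (fun i => -A i) (fun i => -B i)
  | ⟨m, n, h⟩ => ⟨m, n, fun k => congrArg Neg.neg (h k)⟩

lemma commonTail_add_left (A : ℕ → ℤ) (m : ℕ) : CommonTail A (fun i => A (m + i)) :=
  ⟨m, 0, fun k => by rw [zero_add]⟩

lemma commonTail_add_one (A : ℕ → ℤ) : CommonTail A (fun i => A (i + 1)) := by
  simpa only [add_comm 1] using commonTail_add_left A 1

lemma commonTail_addHead (k : ℤ) (A : ℕ → ℤ) : CommonTail A (addHead k A) :=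
  (commonTail_add_one A).trans (commonTail_add_one (addHead k A)).symm

lemma commonTail_consDigit (a : ℤ) (A : ℕ → ℤ) : CommonTail A (consDigit a A) :=
  (commonTail_add_one (consDigit a A)).symm

/-- The digit sequences with the tail of `ρ_q` or of `-ρ_q`. -/
def Exceptional (q : ℕ) (A : ℕ → ℤ) : Prop :=
  CommonTail A (rho q) ∨ CommonTail A (fun i => -rho q i)

/-- The coarsening of `CommonTail` that identifies all exceptional sequences. -/
def TailRel (q : ℕ) (A B : ℕ → ℤ) : Prop :=
  CommonTail A B ∨ (Exceptional q A ∧ Exceptional q B)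

lemma Exceptional.neg (h : Exceptional q A) : Exceptional q (fun i => -A i) :=
  h.symm.imp (fun h => by simpa only [neg_neg] using h.neg) CommonTail.neg

lemma Exceptional.of_commonTail (h : Exceptional q A) (hAB : CommonTail A B) : Exceptional q B :=
  h.imp hAB.symm.trans hAB.symm.trans

lemma TailRel.refl (A : ℕ → ℤ) : TailRel q A A := .inl (.refl A)

lemma TailRel.trans : TailRel q A B → TailRel q B C → TailRel q A C
  | .inl h, .inl h' => .inl (h.trans h')
  | .inl h, .inr ⟨hB, hC⟩ => .inr ⟨hB.of_commonTail h.symm, hC⟩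
  | .inr ⟨hA, hB⟩, .inl h' => .inr ⟨hA, hB.of_commonTail h'⟩
  | .inr ⟨hA, _⟩, .inr ⟨_, hC⟩ => .inr ⟨hA, hC⟩

lemma TailRel.neg (h : TailRel q A B) : TailRel q (fun i => -A i) (fun i => -B i) :=
  h.imp CommonTail.neg (And.imp Exceptional.neg Exceptional.neg)

end CommonTail

/-- Every nonterminating nearest expansion of either point is matched, up to `TailRel`, by one of
the other. -/
def TailEquiv (q : ℕ) (x y : ℝ) : Prop :=
  (∀ A, IsNearestExpansion (lamq q) x A → ∃ B, IsNearestExpansion (lamq q) y B ∧ TailRel q A B) ∧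
    ∀ B, IsNearestExpansion (lamq q) y B → ∃ A, IsNearestExpansion (lamq q) x A ∧ TailRel q B A

section TailEquiv

variable {q : ℕ} {x y z : ℝ}

lemma TailEquiv.refl (x : ℝ) : TailEquiv q x x :=
  ⟨fun A hA => ⟨A, hA, .refl A⟩, fun A hA => ⟨A, hA, .refl A⟩⟩

lemma TailEquiv.symm (h : TailEquiv q x y) : TailEquiv q y x := And.symm h

lemma TailEquiv.trans (h : TailEquiv q x y) (h' : TailEquiv q y z) : TailEquiv q x z := by
  refine ⟨fun A hA => ?_, fun C hC => ?_⟩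
  · obtain ⟨B, hB, hAB⟩ := h.1 A hA
    obtain ⟨C, hC, hBC⟩ := h'.1 B hB
    exact ⟨C, hC, hAB.trans hBC⟩
  · obtain ⟨B, hB, hCB⟩ := h'.2 C hC
    obtain ⟨A, hA, hBA⟩ := h.2 B hB
    exact ⟨A, hA, hCB.trans hBA⟩

lemma TailEquiv.neg (h : TailEquiv q x y) : TailEquiv q (-x) (-y) := by
  have hneg : ∀ {u v : ℝ}, (∀ A, IsNearestExpansion (lamq q) u A →
      ∃ B, IsNearestExpansion (lamq q) v B ∧ TailRel q A B) → ∀ A,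
      IsNearestExpansion (lamq q) (-u) A →
      ∃ B, IsNearestExpansion (lamq q) (-v) B ∧ TailRel q A B := fun huv A hA => by
    obtain ⟨B, hB, hAB⟩ := huv _ (by simpa only [neg_neg] using hA.neg)
    exact ⟨_, hB.neg, by simpa only [neg_neg] using hAB.neg⟩
  exact ⟨hneg h.1, hneg h.2⟩

lemma TailEquiv.of_forall_not (hx : ∀ A, ¬ IsNearestExpansion (lamq q) x A)
    (hy : ∀ A, ¬ IsNearestExpansion (lamq q) y A) : TailEquiv q x y :=
  ⟨fun A hA => absurd hA (hx A), fun A hA => absurd hA (hy A)⟩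

lemma TailEquiv.forall_not (h : TailEquiv q x y)
    (hy : ∀ A, ¬ IsNearestExpansion (lamq q) y A) (A : ℕ → ℤ) :
    ¬ IsNearestExpansion (lamq q) x A := fun hA =>
  let ⟨B, hB, _⟩ := h.1 A hA
  hy B hB

lemma tailEquiv_add_int_mul (x : ℝ) (k : ℤ) : TailEquiv q x (x + k * lamq q) := by
  have hadd : ∀ (u : ℝ) (k : ℤ) (A : ℕ → ℤ), IsNearestExpansion (lamq q) u A →
      ∃ B, IsNearestExpansion (lamq q) (u + k * lamq q) B ∧ TailRel q A B :=
    fun u k A hA => ⟨_, hA.add_int_mul k, .inl (commonTail_addHead k A)⟩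
  refine ⟨hadd x k, fun B hB => ?_⟩
  simpa using hadd _ (-k) B hB

lemma tailEquiv_lamq_add (x : ℝ) : TailEquiv q x (lamq q + x) := by
  simpa [add_comm] using tailEquiv_add_int_mul (q := q) x 1

lemma tailEquiv_inv_sub {a : ℤ} (hlt : |x - a * lamq q| < lamq q / 2) (hne : x ≠ a * lamq q) :
    TailEquiv q x (a * lamq q - x)⁻¹ := by
  refine ⟨fun A hA => ?_, fun B hB => ⟨_, hB.cons hlt.le hne, .inl (commonTail_consDigit a B)⟩⟩
  obtain ⟨hle, -, htail⟩ := isNearestExpansion_iff.1 hA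
  rw [int_eq_of_abs_sub_mul_lt hle hlt] at htail
  exact ⟨_, htail, .inl (commonTail_add_one A)⟩

lemma ReducesTo.tailEquiv {w : List ℤ} (h : ReducesTo (lamq q) w x y) : TailEquiv q x y := by
  induction w generalizing x with
  | nil => exact h ▸ .refl x
  | cons a w ih => exact (tailEquiv_inv_sub h.1 h.2.1).trans (ih h.2.2)

lemma tailEquiv_onesMap {j : ℕ} (hq : 3 ≤ q) (hj : j < q) (hx : lamq q / 2 < x)
    (hlt : sinRatio q j * x < sinRatio q (j + 1)) : TailEquiv q x (onesMap q j x) :=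
  (reducesTo_replicate_one hq hj hx hlt).tailEquiv.trans (tailEquiv_lamq_add _).symm

end TailEquiv

/-! ## Endpoints have no infinite expansion -/

section Endpoint

variable {q : ℕ} {x : ℝ} {A B : ℕ → ℤ}

lemma sinRatio_hQ_add_two_of_even (hq : 3 ≤ q) (he : Even q) :
    sinRatio q (hQ q + 2) = sinRatio q (hQ q) :=
  sinRatio_symm hq (by have := eq_two_mul_hQ_add_two hq he; omega)

lemma sinRatio_hQ_add_two_of_odd (hq : 3 ≤ q) (ho : ¬ Even q) :
    sinRatio q (hQ q + 2) = sinRatio q (hQ q + 1) :=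
  sinRatio_symm hq (by have := eq_two_mul_hQ_add_three hq ho; omega)

lemma sinRatio_hQ_of_odd (hq : 3 ≤ q) (ho : ¬ Even q) :
    sinRatio q (hQ q) = (lamq q - 1) * sinRatio q (hQ q + 1) := by
  linarith [sinRatio_add_two (q := q) (hQ q), sinRatio_hQ_add_two_of_odd hq ho]

lemma sinRatio_hQ_add_one_pos (hq : 3 ≤ q) : 0 < sinRatio q (hQ q + 1) := by
  obtain ⟨j, hj⟩ := exists_hQ_add_add_two_eq hq
  exact sinRatio_pos hq (hQ q).succ_pos (by omega)

lemma sinRatio_hQ_lt (hq : 3 ≤ q) : sinRatio q (hQ q) < sinRatio q (hQ q + 1) := by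
  have hpos := sinRatio_hQ_add_one_pos hq
  have hlam2 := lamq_lt_two hq
  by_cases he : Even q
  · nlinarith [sinRatio_hQ_add_two_of_even hq he, sinRatio_add_two (q := q) (hQ q)]
  · nlinarith [sinRatio_hQ_of_odd hq he]

lemma sinRatio_hQ_add_two_le (hq : 3 ≤ q) :
    sinRatio q (hQ q + 2) ≤ sinRatio q (hQ q + 1) := by
  by_cases he : Even q
  · exact (sinRatio_hQ_add_two_of_even hq he).trans_le (sinRatio_hQ_lt hq).le
  · exact (sinRatio_hQ_add_two_of_odd hq he).le

lemma tailEquiv_two_div_lamq_zero_of_even (hq : 3 ≤ q) (he : Even q) :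
    TailEquiv q (2 / lamq q) 0 := by
  have hlam := lamq_pos hq
  have hlam2 := lamq_lt_two hq
  have hh := eq_two_mul_hQ_add_two hq he
  obtain ⟨k, hk⟩ : ∃ k, hQ q = k + 1 := Nat.exists_eq_succ_of_ne_zero (by omega)
  have htwo : 2 * sinRatio q (k + 1) = lamq q * sinRatio q (k + 2) := by
    have := sinRatio_hQ_add_two_of_even hq he
    rw [sinRatio_add_two, hk] at this
    linarith
  have hpos : 0 < sinRatio q (k + 2) := sinRatio_pos hq (by omega) (by omega)
  have hzero : onesMap q k (2 / lamq q) = 0 := by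
    rw [onesMap, div_eq_zero_iff]
    left
    field_simp
    linarith
  rw [← hzero]
  refine tailEquiv_onesMap hq (by omega) ?_ ?_
  · rw [lt_div_iff₀ hlam]; nlinarith
  · have hrec := sinRatio_add_two (q := q) k
    rw [← mul_div_assoc, div_lt_iff₀ hlam]
    nlinarith [mul_pos hpos (by nlinarith : 0 < 4 - lamq q ^ 2)]

lemma tailEquiv_one_zero_of_odd (hq : 3 ≤ q) (ho : ¬ Even q) : TailEquiv q 1 0 := by
  have hlam2 := lamq_lt_two hq
  have hzero : onesMap q (hQ q) 1 = 0 := by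
    simp [onesMap, sinRatio_hQ_add_two_of_odd hq ho]
  rw [← hzero]
  have hh := eq_two_mul_hQ_add_three hq ho
  exact tailEquiv_onesMap hq (by omega) (by linarith) (by simpa using sinRatio_hQ_lt hq)

lemma tailEquiv_two_div_lamq_one_of_odd (hq : 3 ≤ q) (ho : ¬ Even q) :
    TailEquiv q (2 / lamq q) 1 := by
  have hlam := lamq_pos hq
  have hlam2 := lamq_lt_two hq
  have hpos := sinRatio_hQ_add_one_pos hq
  have hh := eq_two_mul_hQ_add_three hq ho
  have hone : onesMap q (hQ q) (2 / lamq q) = 1 := by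
    rw [onesMap, sinRatio_hQ_add_two_of_odd hq ho, sinRatio_hQ_of_odd hq ho, div_eq_one_iff_eq]
    · field_simp
      ring
    · have hfactor : 1 - (lamq q - 1) * (2 / lamq q) = (2 - lamq q) / lamq q := by
        field_simp
        ring
      rw [mul_right_comm, ← one_sub_mul, hfactor]
      exact mul_ne_zero (div_ne_zero (by linarith) hlam.ne') hpos.ne'
  rw [← hone]
  refine tailEquiv_onesMap hq (by omega) ?_ ?_
  · rw [lt_div_iff₀ hlam]; nlinarith
  · rw [← mul_div_assoc, div_lt_iff₀ hlam, sinRatio_hQ_of_odd hq ho]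
    nlinarith

lemma not_isNearestExpansion_two_div_lamq (hq : 3 ≤ q) (A : ℕ → ℤ) :
    ¬ IsNearestExpansion (lamq q) (2 / lamq q) A := by
  have hzero : ∀ B, ¬ IsNearestExpansion (lamq q) 0 B :=
    fun B => not_isNearestExpansion_zero (lamq_pos hq)
  by_cases he : Even q
  · exact (tailEquiv_two_div_lamq_zero_of_even hq he).forall_not hzero A
  · have hone := tailEquiv_one_zero_of_odd hq he
    exact ((tailEquiv_two_div_lamq_one_of_odd hq he).trans hone).forall_not hzero A

lemma IsNearestExpansion.abs_sub_lt (hq : 3 ≤ q) (h : IsNearestExpansion (lamq q) x A) :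
    |x - A 0 * lamq q| < lamq q / 2 := by
  obtain ⟨hle, -, htail⟩ := isNearestExpansion_iff.1 h
  refine lt_of_le_of_ne hle fun heq => ?_
  rw [abs_sub_comm] at heq
  rcases eq_or_eq_neg_of_abs_eq heq with heq | heq
  · rw [heq, inv_div] at htail
    exact not_isNearestExpansion_two_div_lamq hq _ htail
  · rw [heq, inv_neg, inv_div] at htail
    exact not_isNearestExpansion_two_div_lamq hq _ (by simpa using htail.neg)

lemma IsNearestExpansion.unique (hq : 3 ≤ q) (hA : IsNearestExpansion (lamq q) x A)
    (hB : IsNearestExpansion (lamq q) x B) : A = B := by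
  ext n
  induction n generalizing x A B with
  | zero => exact int_eq_of_abs_sub_mul_lt (hA 0).1 (hB.abs_sub_lt hq)
  | succ n ih =>
    have hhead : A 0 = B 0 := int_eq_of_abs_sub_mul_lt (hA 0).1 (hB.abs_sub_lt hq)
    have hAtail := (isNearestExpansion_iff.1 hA).2.2
    rw [hhead] at hAtail
    exact ih hAtail (isNearestExpansion_iff.1 hB).2.2

end Endpoint

/-! ## The exceptional point -/

section ExceptionalPoint

variable {q j : ℕ}

lemma Rq_of_even (he : Even q) : Rq q = 1 := if_pos he

lemma Rq_pos : 0 < Rq q := by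
  unfold Rq
  split_ifs
  · exact one_pos
  · have hsqrt : 2 - lamq q < √((2 - lamq q) ^ 2 + 4) := Real.lt_sqrt_of_sq_lt (by linarith)
    linarith

lemma Rq_sq_add_mul_of_odd (ho : ¬ Even q) : Rq q ^ 2 + (2 - lamq q) * Rq q = 1 := by
  have hsqrt := Real.sq_sqrt (by positivity : 0 ≤ (2 - lamq q) ^ 2 + 4)
  rw [Rq, if_neg ho]
  linear_combination hsqrt / 4

lemma Rq_lt_one_of_odd (hq : 3 ≤ q) (ho : ¬ Even q) : Rq q < 1 := by
  nlinarith [Rq_pos (q := q), Rq_sq_add_mul_of_odd ho, lamq_lt_two hq]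

lemma Rq_le_one (hq : 3 ≤ q) : Rq q ≤ 1 := by
  by_cases he : Even q
  · exact (Rq_of_even he).le
  · exact (Rq_lt_one_of_odd hq he).le

lemma lamq_div_two_lt_Rq (hq : 3 ≤ q) : lamq q / 2 < Rq q := by
  have hlam2 := lamq_lt_two hq
  by_cases he : Even q
  · rw [Rq_of_even he]; linarith
  · by_contra! hle
    nlinarith [Rq_pos (q := q), Rq_sq_add_mul_of_odd he]

lemma Rq_lt_lamq (hq : 3 ≤ q) : Rq q < lamq q := by
  by_cases he : Even q
  · have hpos : 0 < sinRatio q 3 :=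
      sinRatio_pos hq three_pos (by have := eq_two_mul_hQ_add_two hq he; omega)
    rw [sinRatio_add_two, sinRatio_two hq, sinRatio_one hq] at hpos
    rw [Rq_of_even he]
    nlinarith [lamq_pos hq]
  · exact (Rq_lt_one_of_odd hq he).trans_le (one_le_lamq hq)

lemma sinRatio_hQ_le (hq : 3 ≤ q) : sinRatio q (hQ q) ≤ lamq q / 2 * sinRatio q (hQ q + 1) := by
  by_cases he : Even q
  · linarith [sinRatio_add_two (q := q) (hQ q), sinRatio_hQ_add_two_of_even hq he]
  · nlinarith [sinRatio_hQ_of_odd hq he, sinRatio_hQ_add_one_pos hq, lamq_lt_two hq]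

lemma sinRatio_hQ_lt_mul {x : ℝ} (hq : 3 ≤ q) (hx : lamq q / 2 < x) :
    sinRatio q (hQ q) < sinRatio q (hQ q + 1) * x := by
  nlinarith [sinRatio_hQ_le hq, sinRatio_hQ_add_one_pos hq]

lemma sinRatio_hQ_add_two_mul_Rq_lt (hq : 3 ≤ q) :
    sinRatio q (hQ q + 2) * Rq q < sinRatio q (hQ q + 1) := by
  by_cases he : Even q
  · simpa [Rq_of_even he, sinRatio_hQ_add_two_of_even hq he] using sinRatio_hQ_lt hq
  · rw [sinRatio_hQ_add_two_of_odd hq he]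
    exact mul_lt_of_lt_one_right (sinRatio_hQ_add_one_pos hq) (Rq_lt_one_of_odd hq he)

lemma sinRatio_mul_Rq_sq_sub_one (hq : 3 ≤ q) : sinRatio q (hQ q + 1) * (Rq q ^ 2 - 1) =
    (sinRatio q (hQ q) - sinRatio q (hQ q + 2)) * Rq q := by
  by_cases he : Even q
  · simp [Rq_of_even he, sinRatio_hQ_add_two_of_even hq he]
  · rw [sinRatio_hQ_of_odd hq he, sinRatio_hQ_add_two_of_odd hq he]
    linear_combination sinRatio q (hQ q + 1) * Rq_sq_add_mul_of_odd he

lemma onesMap_Rq (hq : 3 ≤ q) (hj : hQ q + j + 2 = q) : onesMap q j (Rq q) = (Rq q)⁻¹ := by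
  have hden : 0 < sinRatio q (hQ q + 1) - sinRatio q (hQ q + 2) * Rq q :=
    sub_pos.2 (sinRatio_hQ_add_two_mul_Rq_lt hq)
  have hR := Rq_pos (q := q)
  rw [onesMap_eq_of_add_add_two hq hj, div_eq_iff hden.ne', inv_mul_eq_div, eq_div_iff hR.ne']
  linear_combination sinRatio_mul_Rq_sq_sub_one hq

lemma sinRatio_mul_lt_iff {x : ℝ} (hq : 3 ≤ q) (hj : hQ q + j + 2 = q) :
    sinRatio q j * x < sinRatio q (j + 1) ↔
      sinRatio q (hQ q + 2) * x < sinRatio q (hQ q + 1) := by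
  rw [sinRatio_symm hq (by omega : j + (hQ q + 2) = q),
    sinRatio_symm hq (by omega : j + 1 + (hQ q + 1) = q)]

lemma reducesTo_Rq (hq : 3 ≤ q) (hj : hQ q + j + 2 = q) :
    ReducesTo (lamq q) (List.replicate j 1) (Rq q) (lamq q + (Rq q)⁻¹) := by
  rw [← onesMap_Rq hq hj]
  exact reducesTo_replicate_one hq (by omega) (lamq_div_two_lt_Rq hq)
    ((sinRatio_mul_lt_iff hq hj).2 (sinRatio_hQ_add_two_mul_Rq_lt hq))

lemma reducesTo_inv_Rq (hq : 3 ≤ q) :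
    ReducesTo (lamq q) (List.replicate (hQ q) 1) (Rq q)⁻¹ (lamq q + Rq q) := by
  obtain ⟨j, hj⟩ := exists_hQ_add_add_two_eq hq
  have hR := Rq_pos (q := q)
  have hinv : onesMap q (hQ q) (Rq q)⁻¹ = Rq q := by
    rw [onesMap_inv hq hj hR.ne', onesMap_Rq hq hj, inv_inv]
  have hlt := reducesTo_replicate_one (x := (Rq q)⁻¹) hq (by omega : hQ q < q)
    ((by linarith [lamq_lt_two hq] : lamq q / 2 < 1).trans_le
      ((one_le_inv₀ hR).2 (Rq_le_one hq)))
    (by rw [← div_eq_mul_inv, div_lt_iff₀ hR]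
        exact sinRatio_hQ_lt_mul hq (lamq_div_two_lt_Rq hq))
  rwa [hinv] at hlt

lemma reducesTo_singleton_one_Rq (hq : 3 ≤ q) :
    ReducesTo (lamq q) [1] (Rq q) (lamq q - Rq q)⁻¹ := by
  have hhalf := lamq_div_two_lt_Rq hq
  have hlt := Rq_lt_lamq hq
  simp only [ReducesTo, Int.cast_one, one_mul, and_true]
  exact ⟨abs_lt.2 ⟨by linarith, by linarith⟩, hlt.ne⟩

lemma rhoBlock_ne_nil : rhoBlock q ≠ [] := by
  unfold rhoBlock
  split_ifs <;> simp

lemma reducesTo_rhoBlock_three : ReducesTo (lamq 3) [3] (lamq 3 - Rq 3)⁻¹ (lamq 3 - Rq 3)⁻¹ := by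
  have hfirst := (reducesTo_Rq (q := 3) (j := 1) le_rfl rfl).2.2
  have hsecond : ReducesTo (lamq 3) [] (Rq 3)⁻¹ (lamq 3 + Rq 3) := reducesTo_inv_Rq le_rfl
  have hX : (lamq 3 - Rq 3)⁻¹ = Rq 3 + (2 : ℤ) * lamq 3 := by
    simp only [List.replicate_zero, ReducesTo, Int.cast_one, one_mul] at hfirst hsecond
    rw [hfirst, hsecond]
    push_cast
    ring
  have hthree := (reducesTo_singleton_one_Rq (q := 3) le_rfl).add_int_mul 2
  rwa [← hX] at hthree

lemma reducesTo_two_Rq (hq : 3 ≤ q) :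
    ReducesTo (lamq q) [2] (lamq q + Rq q) (lamq q - Rq q)⁻¹ := by
  simpa [add_comm] using (reducesTo_singleton_one_Rq hq).add_int_mul 1

lemma reducesTo_rhoBlock_of_even (hq : 3 ≤ q) (he : Even q) :
    ReducesTo (lamq q) (List.replicate (hQ q - 1) 1 ++ [2]) (lamq q - Rq q)⁻¹
      (lamq q - Rq q)⁻¹ := by
  have hh := eq_two_mul_hQ_add_two hq he
  obtain ⟨k, hk⟩ : ∃ k, hQ q = k + 1 := Nat.exists_eq_succ_of_ne_zero (by omega)
  have hones : ReducesTo (lamq q) (List.replicate k 1) (lamq q - Rq q)⁻¹ (lamq q + Rq q) := by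
    have h := reducesTo_inv_Rq hq
    rw [Rq_of_even he, inv_one, hk] at h
    simpa [Rq_of_even he] using h.2.2
  simpa [hk] using hones.append (reducesTo_two_Rq hq)

lemma reducesTo_rhoBlock_of_odd (hq : 3 < q) (ho : ¬ Even q) :
    ReducesTo (lamq q) (List.replicate (hQ q) 1 ++ 2 :: (List.replicate (hQ q - 1) 1 ++ [2]))
      (lamq q - Rq q)⁻¹ (lamq q - Rq q)⁻¹ := by
  have hh := eq_two_mul_hQ_add_three hq.le ho
  obtain ⟨k, hk⟩ : ∃ k, hQ q = k + 1 := Nat.exists_eq_succ_of_ne_zero (by omega)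
  have hfirst : ReducesTo (lamq q) (List.replicate (hQ q) 1) (lamq q - Rq q)⁻¹
      (lamq q + (Rq q)⁻¹) := by
    simpa using (reducesTo_Rq (j := hQ q + 1) hq.le (by omega)).2.2
  have hones := reducesTo_inv_Rq hq.le
  rw [hk, List.replicate_succ] at hones
  have hsecond := hones.add_int_mul 1
  rw [Int.cast_one, one_mul, add_comm (Rq q)⁻¹, one_add_one_eq_two] at hsecond
  simpa [hk] using hfirst.append (hsecond.append (reducesTo_two_Rq hq.le))

lemma reducesTo_rhoBlock (hq : 3 ≤ q) :
    ReducesTo (lamq q) (rhoBlock q) (lamq q - Rq q)⁻¹ (lamq q - Rq q)⁻¹ := by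
  unfold rhoBlock
  split_ifs with h3 he
  · exact h3 ▸ reducesTo_rhoBlock_three
  · exact reducesTo_rhoBlock_of_even hq he
  · exact reducesTo_rhoBlock_of_odd (by omega) he

lemma exists_isNearestExpansion_Rq (hq : 3 ≤ q) :
    ∃ A, IsNearestExpansion (lamq q) (Rq q) A ∧ CommonTail A (rho q) := by
  obtain ⟨hlt, hne, -⟩ := reducesTo_singleton_one_Rq hq
  have hrho : IsNearestExpansion (lamq q) (((1 : ℤ) : ℝ) * lamq q - Rq q)⁻¹ (rho q) := by
    rw [Int.cast_one, one_mul]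
    exact (reducesTo_rhoBlock hq).isNearestExpansion_periodic rhoBlock_ne_nil
  exact ⟨_, hrho.cons hlt.le hne, (commonTail_consDigit 1 (rho q)).symm⟩

lemma tailEquiv_Rq_neg_Rq (hq : 3 ≤ q) : TailEquiv q (Rq q) (-Rq q) := by
  obtain ⟨A, hA, hrho⟩ := exists_isNearestExpansion_Rq hq
  have hexc : Exceptional q A := .inl hrho
  refine ⟨fun B hB => ⟨_, hA.neg, .inr ⟨?_, hexc.neg⟩⟩, fun B hB => ⟨A, hA, .inr ⟨?_, hexc⟩⟩⟩
  · rwa [hB.unique hq hA]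
  · rw [hB.unique hq hA.neg]
    exact hexc.neg

lemma tailEquiv_Rq_inv_Rq (hq : 3 ≤ q) : TailEquiv q (Rq q) (Rq q)⁻¹ := by
  obtain ⟨j, hj⟩ := exists_hQ_add_add_two_eq hq
  exact (reducesTo_Rq hq hj).tailEquiv.trans (tailEquiv_lamq_add _).symm

lemma tailEquiv_Rq_neg_inv_Rq (hq : 3 ≤ q) : TailEquiv q (Rq q) (-(Rq q)⁻¹) :=
  (tailEquiv_Rq_neg_Rq hq).trans (tailEquiv_Rq_inv_Rq hq).neg

end ExceptionalPoint

/-! ## Invariance under inversion -/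

section InversionInvariance

variable {q j : ℕ} {x : ℝ}

lemma tailEquiv_neg_inv_neg_iff : TailEquiv q (-x) (-(-x)⁻¹) ↔ TailEquiv q x (-x⁻¹) := by
  constructor <;> intro h <;> simpa [inv_neg] using h.neg

lemma tailEquiv_neg_inv_inv_iff : TailEquiv q x⁻¹ (-x⁻¹⁻¹) ↔ TailEquiv q x (-x⁻¹) := by
  constructor <;> intro h <;> simpa using h.symm.neg

lemma tailEquiv_neg_inv_of_abs_le (hq : 3 ≤ q) (hx : |x| ≤ lamq q / 2) :
    TailEquiv q x (-x⁻¹) := by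
  rcases eq_or_ne x 0 with rfl | hx0
  · simpa using TailEquiv.refl (q := q) 0
  rcases hx.lt_or_eq with hlt | heq
  · simpa [inv_neg] using tailEquiv_inv_sub (a := 0) (by simpa using hlt) (by simpa using hx0)
  · have hzero : ∀ A, IsNearestExpansion (lamq q) x A → A 0 = 0 := fun A hA =>
      (int_eq_of_abs_sub_mul_lt (by simpa using hx) (hA.abs_sub_lt hq)).symm
    refine .of_forall_not (fun A hA => ?_) (fun A hA => ?_)
    · have := hA.abs_sub_lt hq
      simp only [hzero A hA, Int.cast_zero, zero_mul, sub_zero] at this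
      exact this.ne heq
    · rcases eq_or_eq_neg_of_abs_eq heq with rfl | rfl
      · exact not_isNearestExpansion_two_div_lamq hq _ (by simpa using hA.neg)
      · exact not_isNearestExpansion_two_div_lamq hq A (by simpa [inv_neg] using hA)

lemma tailEquiv_neg_inv_of_le (hq : 3 ≤ q) (hx : 2 / lamq q ≤ x) : TailEquiv q x (-x⁻¹) := by
  have hpos : 0 < 2 / lamq q := div_pos two_pos (lamq_pos hq)
  refine tailEquiv_neg_inv_inv_iff.1 (tailEquiv_neg_inv_of_abs_le hq ?_)
  rw [abs_of_pos (inv_pos.2 (hpos.trans_le hx)), ← inv_div]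
  exact inv_anti₀ hpos hx

/-- A block of ones read off `x` and a complementary block read off `x⁻¹` lead to inverse
points, which transports the question from `x` to `onesMap q j x`. -/
lemma tailEquiv_neg_inv_of_onesMap (hq : 3 ≤ q) (hj : hQ q + j + 2 = q) (hx : lamq q / 2 < x)
    (hx' : x < 2 / lamq q) (hlt : sinRatio q j * x < sinRatio q (j + 1))
    (h : TailEquiv q (onesMap q j x) (-(onesMap q j x)⁻¹)) : TailEquiv q x (-x⁻¹) := by
  have hlam := lamq_pos hq
  have hx0 : 0 < x := by linarith
  have hinv : TailEquiv q x⁻¹ (onesMap q j x)⁻¹ := by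
    rw [← onesMap_inv hq hj hx0.ne']
    refine tailEquiv_onesMap hq (by omega) ?_ ?_
    · rwa [← inv_div, inv_lt_inv₀ (by positivity) hx0]
    · rw [← div_eq_mul_inv, div_lt_iff₀ hx0]
      exact sinRatio_hQ_lt_mul hq hx
  exact ((tailEquiv_onesMap hq (by omega) hx hlt).trans h).trans hinv.symm.neg

/-- The counterexamples `x` to the equivalence of `x` and `-x⁻¹` off which `j` digits `1` can be
read. The set is shown to be empty because it would be invariant under an expanding map whose
fixed point is no counterexample. -/
def badSet (q j : ℕ) : Set ℝ :=
  {x | lamq q / 2 < x ∧ x < 2 / lamq q ∧ sinRatio q j * x < sinRatio q (j + 1) ∧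
    ¬ TailEquiv q x (-x⁻¹)}

lemma inv_onesMap_eq (hq : 3 ≤ q) (hj : hQ q + j + 2 = q) (x : ℝ) :
    (onesMap q j x)⁻¹ = (sinRatio q (hQ q + 1) - sinRatio q (hQ q + 2) * x) /
      (sinRatio q (hQ q + 1) * x - sinRatio q (hQ q)) := by
  rw [onesMap_eq_of_add_add_two hq hj, inv_div]

lemma sinRatio_mul_inv_onesMap_lt (hq : 3 ≤ q) (hj : hQ q + j + 2 = q) (hx : lamq q / 2 < x)
    (hinv : (onesMap q j x)⁻¹ < 2 / lamq q) :
    sinRatio q j * (onesMap q j x)⁻¹ < sinRatio q (j + 1) := by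
  have hpos := sinRatio_hQ_add_one_pos hq
  have hlam := lamq_pos hq
  rw [sinRatio_mul_lt_iff hq hj]
  by_cases he : Even q
  · rw [lt_div_iff₀ hlam] at hinv
    have hhalf : sinRatio q (hQ q + 2) = lamq q / 2 * sinRatio q (hQ q + 1) := by
      linarith [sinRatio_add_two (q := q) (hQ q), sinRatio_hQ_add_two_of_even hq he]
    rw [hhalf]
    nlinarith
  · have hden : 0 < sinRatio q (hQ q + 1) * x - sinRatio q (hQ q) :=
      sub_pos.2 (sinRatio_hQ_lt_mul hq hx)
    rw [inv_onesMap_eq hq hj, sinRatio_hQ_add_two_of_odd hq he]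
    refine mul_lt_of_lt_one_right hpos ((div_lt_one hden).2 ?_)
    rw [sinRatio_hQ_of_odd hq he]
    nlinarith

lemma mapsTo_inv_onesMap_badSet (hq : 3 ≤ q) (hj : hQ q + j + 2 = q) :
    Set.MapsTo (fun x => (onesMap q j x)⁻¹) (badSet q j) (badSet q j) := by
  rintro x ⟨hx, hx', hlt, hbad⟩
  have hpos : 0 < (onesMap q j x)⁻¹ := by
    rw [inv_onesMap_eq hq hj]
    exact div_pos (sub_pos.2 ((sinRatio_mul_lt_iff hq hj).1 hlt))
      (sub_pos.2 (sinRatio_hQ_lt_mul hq hx))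
  have hbad' : ¬ TailEquiv q (onesMap q j x)⁻¹ (-(onesMap q j x)⁻¹⁻¹) := fun h =>
    hbad (tailEquiv_neg_inv_of_onesMap hq hj hx hx' hlt (tailEquiv_neg_inv_inv_iff.1 h))
  have hlow : lamq q / 2 < (onesMap q j x)⁻¹ := by
    by_contra! hle
    exact hbad' (tailEquiv_neg_inv_of_abs_le hq (by rwa [abs_of_pos hpos]))
  have hhigh : (onesMap q j x)⁻¹ < 2 / lamq q := by
    by_contra! hle
    exact hbad' (tailEquiv_neg_inv_of_le hq hle)
  exact ⟨hlow, hhigh, sinRatio_mul_inv_onesMap_lt hq hj hx hhigh, hbad'⟩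

/-- The coordinate on the positive reals that sends `R` to `0` and `-R⁻¹` to `∞`, the two fixed
points of `x ↦ (onesMap q j x)⁻¹`; in it that map is linear. -/
noncomputable def fixedPointCoord (R x : ℝ) : ℝ := (x - R) / (1 + R * x)

lemma abs_fixedPointCoord_le {R : ℝ} (hR : 0 < R) (hR1 : R ≤ 1) (hx : 0 ≤ x) :
    |fixedPointCoord R x| ≤ R⁻¹ := by
  have hden : 0 < 1 + R * x := by positivity
  rw [fixedPointCoord, abs_div, abs_of_pos hden, div_le_iff₀ hden, inv_mul_eq_div,
    le_div_iff₀ hR]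
  cases abs_cases (x - R) <;> nlinarith

lemma fixedPointCoord_inv_onesMap (hq : 3 ≤ q) (hj : hQ q + j + 2 = q) (hx : lamq q / 2 < x) :
    fixedPointCoord (Rq q) (onesMap q j x)⁻¹ =
      -((sinRatio q (hQ q + 2) + sinRatio q (hQ q + 1) * Rq q) /
        (sinRatio q (hQ q + 1) * Rq q - sinRatio q (hQ q))) * fixedPointCoord (Rq q) x := by
  have hR := Rq_pos (q := q)
  have hx0 : 0 < x := by linarith [lamq_pos hq]
  have hden : sinRatio q (hQ q + 1) * x - sinRatio q (hQ q) ≠ 0 :=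
    (sub_pos.2 (sinRatio_hQ_lt_mul hq hx)).ne'
  have ha : sinRatio q (hQ q + 1) * Rq q - sinRatio q (hQ q) ≠ 0 :=
    (sub_pos.2 (sinRatio_hQ_lt_mul hq (lamq_div_two_lt_Rq hq))).ne'
  have hquad := sinRatio_mul_Rq_sq_sub_one hq
  have hnum : (onesMap q j x)⁻¹ - Rq q =
      -(sinRatio q (hQ q + 2) + sinRatio q (hQ q + 1) * Rq q) * (x - Rq q) /
        (sinRatio q (hQ q + 1) * x - sinRatio q (hQ q)) := by
    rw [inv_onesMap_eq hq hj, eq_div_iff hden, sub_mul, div_mul_cancel₀ _ hden]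
    linear_combination -hquad
  have hnum' : 1 + Rq q * (onesMap q j x)⁻¹ =
      (sinRatio q (hQ q + 1) * Rq q - sinRatio q (hQ q)) * (1 + Rq q * x) /
        (sinRatio q (hQ q + 1) * x - sinRatio q (hQ q)) := by
    rw [inv_onesMap_eq hq hj, eq_div_iff hden, add_mul, mul_assoc, div_mul_cancel₀ _ hden]
    linear_combination -x * hquad
  have hfac : 1 + Rq q * x ≠ 0 := by positivity
  rw [fixedPointCoord, fixedPointCoord, hnum, hnum', div_div_div_cancel_right₀ hden]
  field_simp

lemma badSet_eq_empty (hq : 3 ≤ q) (hj : hQ q + j + 2 = q) : badSet q j = ∅ := by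
  have hR := Rq_pos (q := q)
  set a := sinRatio q (hQ q + 1) * Rq q - sinRatio q (hQ q)
  set b := sinRatio q (hQ q + 2) + sinRatio q (hQ q + 1) * Rq q
  have ha : 0 < a := sub_pos.2 (sinRatio_hQ_lt_mul hq (lamq_div_two_lt_Rq hq))
  have hab : 1 < b / a := by
    rw [one_lt_div ha]
    have hs := mul_pos (lamq_pos hq) (sinRatio_hQ_add_one_pos hq)
    linarith [sinRatio_add_two (q := q) (hQ q)]
  rw [Set.eq_empty_iff_forall_notMem]
  intro x hx
  set g : ℝ → ℝ := fun x => (onesMap q j x)⁻¹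
  have hmem : ∀ n, g^[n] x ∈ badSet q j := fun n =>
    (mapsTo_inv_onesMap_badSet hq hj).iterate n hx
  have hlam := lamq_pos hq
  have hw : fixedPointCoord (Rq q) x = 0 := by
    refine eq_zero_of_expanding (d := fun n => fixedPointCoord (Rq q) (g^[n] x)) hab
      (fun n => ?_) (fun n => abs_fixedPointCoord_le hR (Rq_le_one hq)
        (by linarith [(hmem n).1]))
    rw [Function.iterate_succ_apply', fixedPointCoord_inv_onesMap hq hj (hmem n).1, abs_mul,
      abs_neg, abs_of_pos (by linarith : 0 < b / a)]
  have hx0 : 0 < x := by linarith [hx.1]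
  have hxR : x = Rq q := by
    rw [fixedPointCoord, div_eq_zero_iff, sub_eq_zero] at hw
    exact hw.resolve_right (by positivity)
  exact hx.2.2.2 (hxR ▸ tailEquiv_Rq_neg_inv_Rq hq)

lemma tailEquiv_one_neg_inv_of_odd (hq : 3 ≤ q) (ho : ¬ Even q) : TailEquiv q 1 (-1⁻¹) := by
  have hone := (tailEquiv_one_zero_of_odd hq ho).forall_not
    fun A => not_isNearestExpansion_zero (lamq_pos hq)
  exact .of_forall_not hone fun A hA => hone _ (by simpa using hA.neg)

lemma tailEquiv_neg_inv_of_pos (hq : 3 ≤ q) (hx : 0 < x) : TailEquiv q x (-x⁻¹) := by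
  obtain ⟨j, hj⟩ := exists_hQ_add_add_two_eq hq
  have hmain : ∀ {z : ℝ}, 0 < z → sinRatio q (hQ q + 2) * z < sinRatio q (hQ q + 1) →
      TailEquiv q z (-z⁻¹) := fun {z} hz hlt => by
    by_contra hbad
    have hmem : z ∈ badSet q j := by
      refine ⟨?_, ?_, (sinRatio_mul_lt_iff hq hj).2 hlt, hbad⟩ <;> by_contra! hle
      · exact hbad (tailEquiv_neg_inv_of_abs_le hq (by rwa [abs_of_pos hz]))
      · exact hbad (tailEquiv_neg_inv_of_le hq hle)
    simp [badSet_eq_empty hq hj] at hmem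
  have hlt_one : ∀ {z : ℝ}, 0 < z → z < 1 → TailEquiv q z (-z⁻¹) := fun {z} hz hz1 =>
    hmain hz (by nlinarith [sinRatio_hQ_add_two_le hq, sinRatio_hQ_add_one_pos hq])
  rcases lt_trichotomy x 1 with hlt | rfl | hgt
  · exact hlt_one hx hlt
  · by_cases he : Even q
    · exact hmain hx (by simpa [sinRatio_hQ_add_two_of_even hq he] using sinRatio_hQ_lt hq)
    · exact tailEquiv_one_neg_inv_of_odd hq he
  · exact tailEquiv_neg_inv_inv_iff.1 (hlt_one (inv_pos.2 hx) (inv_lt_one_of_one_lt₀ hgt))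

lemma tailEquiv_neg_inv (hq : 3 ≤ q) (x : ℝ) : TailEquiv q x (-x⁻¹) := by
  rcases lt_trichotomy x 0 with hx | rfl | hx
  · exact tailEquiv_neg_inv_neg_iff.1 (tailEquiv_neg_inv_of_pos hq (neg_pos.2 hx))
  · simpa using TailEquiv.refl (q := q) 0
  · exact tailEquiv_neg_inv_of_pos hq hx

end InversionInvariance

/-! ## The action of the Hecke group -/

section HeckeAction

open Matrix.SpecialLinearGroup (toGL)

variable {q : ℕ} {x y z : ℝ}

lemma toGL_smul_coe (g : Matrix.SpecialLinearGroup (Fin 2) ℝ) (x : ℝ) :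
    toGL g • (x : OnePoint ℝ) =
      if g.val 1 0 * x + g.val 1 1 = 0 then .infty else (moeb g x : OnePoint ℝ) :=
  OnePoint.smul_some_eq_ite

lemma gqEquiv_iff_exists_smul_eq :
    GqEquiv q x y ↔ ∃ g ∈ Hecke q, toGL g • (x : OnePoint ℝ) = y := by
  refine exists_congr fun g => and_congr_right fun _ => ?_
  rw [toGL_smul_coe]
  split_ifs with h <;> simp [h]

lemma matS_smul (hx : x ≠ 0) : toGL matS • (x : OnePoint ℝ) = (-x⁻¹ : ℝ) := by
  rw [toGL_smul_coe]
  simp [matS, moeb, hx, neg_div]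

lemma matT_smul (lam : ℝ) : toGL (matT lam) • (x : OnePoint ℝ) = (x + lam : ℝ) := by
  rw [toGL_smul_coe]
  simp [matT, moeb]

lemma GqEquiv.refl (x : ℝ) : GqEquiv q x x :=
  gqEquiv_iff_exists_smul_eq.2 ⟨1, one_mem _, by simp⟩

lemma GqEquiv.symm (h : GqEquiv q x y) : GqEquiv q y x := by
  obtain ⟨g, hg, hxy⟩ := gqEquiv_iff_exists_smul_eq.1 h
  exact gqEquiv_iff_exists_smul_eq.2 ⟨g⁻¹, inv_mem hg, by rw [← hxy, map_inv, inv_smul_smul]⟩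

lemma GqEquiv.trans (hxy : GqEquiv q x y) (hyz : GqEquiv q y z) : GqEquiv q x z := by
  obtain ⟨g, hg, hy⟩ := gqEquiv_iff_exists_smul_eq.1 hxy
  obtain ⟨g', hg', hz⟩ := gqEquiv_iff_exists_smul_eq.1 hyz
  exact gqEquiv_iff_exists_smul_eq.2 ⟨g' * g, mul_mem hg' hg, by rw [map_mul, mul_smul, hy, hz]⟩

lemma gqEquiv_neg_inv (hx : x ≠ 0) : GqEquiv q x (-x⁻¹) :=
  gqEquiv_iff_exists_smul_eq.2 ⟨matS, Subgroup.subset_closure (.inl rfl), matS_smul hx⟩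

lemma gqEquiv_add_lamq (x : ℝ) : GqEquiv q x (x + lamq q) :=
  gqEquiv_iff_exists_smul_eq.2 ⟨matT _, Subgroup.subset_closure (.inr rfl), matT_smul _⟩

lemma gqEquiv_add_int_mul (x : ℝ) (k : ℤ) : GqEquiv q x (x + k * lamq q) := by
  induction k with
  | zero => simpa using GqEquiv.refl x
  | succ n ih =>
    refine ih.trans ?_
    convert gqEquiv_add_lamq (q := q) _ using 1
    push_cast
    ring
  | pred n ih =>
    refine ih.trans (GqEquiv.symm ?_)
    convert gqEquiv_add_lamq (q := q) _ using 1
    push_cast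
    ring

lemma gqEquiv_inv_sub {a : ℤ} (hne : x ≠ a * lamq q) : GqEquiv q x (a * lamq q - x)⁻¹ := by
  have hadd : GqEquiv q x (x - a * lamq q) := by
    simpa [sub_eq_add_neg] using gqEquiv_add_int_mul x (-a)
  simpa only [← inv_neg, neg_sub] using hadd.trans (gqEquiv_neg_inv (sub_ne_zero.2 hne))

lemma ReducesTo.gqEquiv {w : List ℤ} (h : ReducesTo (lamq q) w x y) : GqEquiv q x y := by
  induction w generalizing x with
  | nil => exact h ▸ .refl x
  | cons a w ih => exact (gqEquiv_inv_sub h.2.1).trans (ih h.2.2)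

lemma IsNearestExpansion.gqEquiv_completeQuotient {A : ℕ → ℤ}
    (h : IsNearestExpansion (lamq q) x A) (n : ℕ) :
    GqEquiv q x (completeQuotient (lamq q) x A n) := by
  induction n with
  | zero => exact .refl x
  | succ n ih => exact ih.trans (gqEquiv_inv_sub (h n).2)

lemma IsNearestExpansion.gqEquiv_of_commonTail {A B : ℕ → ℤ} (hq : 3 ≤ q)
    (hx : IsNearestExpansion (lamq q) x A) (hy : IsNearestExpansion (lamq q) y B)
    (hAB : CommonTail A B) : GqEquiv q x y := by
  obtain ⟨m, n, hmn⟩ := hAB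
  have hval : completeQuotient (lamq q) x A m = completeQuotient (lamq q) y B n :=
    (hx.tail m).value_unique (lamq_pos hq) (lamq_lt_two hq) (funext hmn ▸ hy.tail n)
  exact (hx.gqEquiv_completeQuotient m).trans (hval ▸ (hy.gqEquiv_completeQuotient n).symm)

lemma gqEquiv_Rq_neg_Rq (hq : 3 ≤ q) : GqEquiv q (Rq q) (-Rq q) := by
  obtain ⟨j, hj⟩ := exists_hQ_add_add_two_eq hq
  have hinv : GqEquiv q (Rq q) (Rq q)⁻¹ :=
    (reducesTo_Rq hq hj).gqEquiv.trans (add_comm _ (lamq q) ▸ (gqEquiv_add_lamq _).symm)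
  simpa using hinv.trans (gqEquiv_neg_inv (inv_ne_zero Rq_pos.ne'))

lemma IsNearestExpansion.gqEquiv_of_rho_neg_rho {A B : ℕ → ℤ} (hq : 3 ≤ q)
    (hx : IsNearestExpansion (lamq q) x A) (hy : IsNearestExpansion (lamq q) y B)
    (hA : CommonTail A (rho q)) (hB : CommonTail B (fun i => -rho q i)) : GqEquiv q x y := by
  obtain ⟨C, hC, hrho⟩ := exists_isNearestExpansion_Rq hq
  have hxR : GqEquiv q x (Rq q) := hx.gqEquiv_of_commonTail hq hC (hA.trans hrho.symm)
  have hyR : GqEquiv q y (-Rq q) := hy.gqEquiv_of_commonTail hq hC.neg (hB.trans hrho.neg.symm)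
  exact hxR.trans ((gqEquiv_Rq_neg_Rq hq).trans hyR.symm)

lemma IsNearestExpansion.exists_smul_tailEquiv {A : ℕ → ℤ} (hq : 3 ≤ q)
    (hx : IsNearestExpansion (lamq q) x A) {g : Matrix.SpecialLinearGroup (Fin 2) ℝ}
    (hg : g ∈ Hecke q) : ∃ y : ℝ, toGL g • (x : OnePoint ℝ) = y ∧ TailEquiv q x y := by
  have hne : ∀ {y : ℝ}, TailEquiv q x y → y ≠ 0 := by
    rintro y hxy rfl
    exact hxy.forall_not (fun _ => not_isNearestExpansion_zero (lamq_pos hq)) A hx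
  induction hg using Subgroup.closure_induction_left with
  | one => exact ⟨x, by simp, .refl x⟩
  | mul_left s hs g _ ih =>
    obtain ⟨y, hgx, hxy⟩ := ih
    rw [map_mul, mul_smul, hgx]
    obtain rfl | rfl := hs
    · exact ⟨_, matS_smul (hne hxy), hxy.trans (tailEquiv_neg_inv hq y)⟩
    · exact ⟨_, matT_smul _, hxy.trans (by simpa using tailEquiv_add_int_mul y 1)⟩
  | inv_mul_cancel s hs g _ ih =>
    obtain ⟨y, hgx, hxy⟩ := ih
    rw [map_mul, mul_smul, hgx, map_inv]
    obtain rfl | rfl := hs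
    · refine ⟨_, inv_smul_eq_iff.2 ?_, hxy.trans (tailEquiv_neg_inv hq y)⟩
      rw [matS_smul (neg_ne_zero.2 (inv_ne_zero (hne hxy)))]
      simp
    · refine ⟨y - lamq q, inv_smul_eq_iff.2 ?_, hxy.trans ?_⟩
      · rw [matT_smul, sub_add_cancel]
      · simpa [sub_eq_add_neg] using tailEquiv_add_int_mul y (-1)

lemma IsNearestExpansion.tailEquiv_of_gqEquiv {A : ℕ → ℤ} (hq : 3 ≤ q)
    (hx : IsNearestExpansion (lamq q) x A) (h : GqEquiv q x y) : TailEquiv q x y := by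
  obtain ⟨g, hg, hgx⟩ := gqEquiv_iff_exists_smul_eq.1 h
  obtain ⟨z, hgz, hxz⟩ := hx.exists_smul_tailEquiv hq hg
  rwa [OnePoint.coe_injective (hgx.symm.trans hgz)]

end HeckeAction

/-! ## Regular expansions are nearest-multiple expansions -/

/-- The value `[0; b₁, …, bₙ]` of the finite continued fraction with digits `b₁, …, bₙ`. -/
noncomputable def tailValue (lam : ℝ) : List ℤ → ℝ
  | [] => 0
  | b :: w => -(b * lam + tailValue lam w)⁻¹

/-- All denominators met when evaluating `tailValue` are positive. -/
def HasPosDenominators (lam : ℝ) : List ℤ → Prop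
  | [] => True
  | b :: w => 0 < b * lam + tailValue lam w ∧ HasPosDenominators lam w

/-- The lexicographic order on words of nonzero digits for which the digits and the end `∅` of the
word are ordered by `1 < 2 < ⋯ < ∅ < ⋯ < -2 < -1`, that is, by the value of `-1/b`. It is only
meant for left arguments with positive digits. -/
def DigitLE : List ℤ → List ℤ → Prop
  | _, [] => True
  | [], a :: _ => a < 0
  | b :: E, a :: L => a < 0 ∨ b < a ∨ (a = b ∧ DigitLE E L)

section TailValue

variable {lam : ℝ} {E F L : List ℤ}

lemma tailValue_map_neg (L : List ℤ) :
    tailValue lam (L.map Neg.neg) = -tailValue lam L := by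
  induction L with
  | nil => simp [tailValue]
  | cons b w ih =>
    simp only [List.map_cons, tailValue, ih, ← inv_neg]
    push_cast
    ring

lemma HasPosDenominators.tailValue_nonpos (hE : HasPosDenominators lam E) :
    tailValue lam E ≤ 0 := by
  cases E with
  | nil => exact le_rfl
  | cons b w => exact neg_nonpos.2 (inv_nonneg.2 hE.1.le)

lemma tailValue_cons_pos {a : ℤ} (ha : a < 0) (hL : |tailValue lam L| ≤ lam / 2)
    (hlam : 0 < lam) : 0 < tailValue lam (a :: L) := by
  have ha1 : (a : ℝ) ≤ -1 := by exact_mod_cast Int.le_sub_one_of_lt ha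
  exact neg_pos.2 (inv_lt_zero.2 (by nlinarith [(abs_le.1 hL).2]))

lemma DigitLE.tailValue_le (hlam : 0 < lam) (h : DigitLE E L) (hE : HasPosDenominators lam E)
    (hL : ∀ v, v <:+ L.tail → |tailValue lam v| ≤ lam / 2) :
    tailValue lam E ≤ tailValue lam L := by
  induction E generalizing L with
  | nil =>
    cases L with
    | nil => exact le_rfl
    | cons a L => exact (tailValue_cons_pos h (hL L List.suffix_rfl) hlam).le
  | cons b E ih =>
    cases L with
    | nil => exact hE.tailValue_nonpos
    | cons a L =>
      have htail := hL L List.suffix_rfl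
      rcases h with ha | hba | ⟨rfl, hEL⟩
      · exact hE.tailValue_nonpos.trans (tailValue_cons_pos ha htail hlam).le
      · have hba1 : (b : ℝ) + 1 ≤ a := by exact_mod_cast hba
        refine neg_le_neg (inv_anti₀ hE.1 ?_)
        nlinarith [hE.2.tailValue_nonpos, (abs_le.1 htail).1]
      · have hle := ih hEL hE.2 fun v hv => hL v (hv.trans L.tail_suffix)
        exact neg_le_neg (inv_anti₀ hE.1 (by linarith))

lemma exists_eq_replicate_append_of_not_digitLE {k : ℕ} (h0 : 0 ∉ L)
    (h : ¬ DigitLE (List.replicate k 1 ++ F) L) :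
    ∃ L', L = List.replicate k 1 ++ L' ∧ ¬ DigitLE F L' := by
  induction k generalizing L with
  | zero => exact ⟨L, rfl, h⟩
  | succ k ih =>
    cases L with
    | nil => exact absurd trivial h
    | cons a L =>
      simp only [List.mem_cons, not_or, List.replicate_succ, List.cons_append, DigitLE] at h0 h
      obtain ⟨ha, ha1, heq⟩ := h
      obtain rfl : a = 1 := by omega
      obtain ⟨L', rfl, hL'⟩ := ih h0.2 (by tauto)
      exact ⟨L', rfl, hL'⟩

lemma exists_eq_cons_of_not_digitLE_nil (h0 : 0 ∉ L) (h : ¬ DigitLE [] L) :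
    ∃ m L', 1 ≤ m ∧ L = m :: L' := by
  cases L with
  | nil => exact absurd trivial h
  | cons a L =>
    simp only [List.mem_cons, not_or, DigitLE] at h0 h
    exact ⟨a, L, by omega, rfl⟩

lemma tailValue_replicate_one_append {r : ℕ → ℝ} {k : ℕ}
    (hrec : ∀ i, r (i + 2) = lam * r (i + 1) - r i) (hpos : ∀ i ≤ k, 0 < r (i + 1))
    (hF : HasPosDenominators lam F) (hval : tailValue lam F = -(r 0 / r 1)) :
    HasPosDenominators lam (List.replicate k 1 ++ F) ∧
      tailValue lam (List.replicate k 1 ++ F) = -(r k / r (k + 1)) := by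
  induction k with
  | zero => exact ⟨hF, hval⟩
  | succ k ih =>
    obtain ⟨hden, hk⟩ := ih fun i hi => hpos i (by omega)
    have hden_eq : ((1 : ℤ) : ℝ) * lam + tailValue lam (List.replicate k 1 ++ F) =
        r (k + 2) / r (k + 1) := by
      rw [hk, hrec, Int.cast_one, one_mul, sub_div, mul_div_cancel_right₀ _ (hpos k (by omega)).ne',
        sub_eq_add_neg]
    refine ⟨⟨hden_eq ▸ div_pos (hpos (k + 1) le_rfl) (hpos k (by omega)), hden⟩, ?_⟩
    rw [List.replicate_succ, List.cons_append, tailValue, hden_eq, inv_div]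

end TailValue

/-- The lexicographically smallest candidate for a `q`-regular word; its value is `-λ_q / 2`. -/
def boundaryWord (q : ℕ) : List ℤ :=
  if Even q then List.replicate (hQ q) 1
  else List.replicate (hQ q) 1 ++ 2 :: List.replicate (hQ q) 1

section RegularWords

variable {q : ℕ} {L : List ℤ}

lemma tailValue_replicate_one {k : ℕ} (hq : 3 ≤ q) (hk : k + 1 < q) :
    HasPosDenominators (lamq q) (List.replicate k 1) ∧
      tailValue (lamq q) (List.replicate k 1) = -(sinRatio q k / sinRatio q (k + 1)) := by
  simpa using tailValue_replicate_one_append (F := []) (r := sinRatio q) sinRatio_add_two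
    (fun i hi => sinRatio_pos hq i.succ_pos (by omega)) trivial (by simp [tailValue, sinRatio_zero])

lemma tailValue_boundaryWord_of_even (hq : 3 ≤ q) (he : Even q) :
    HasPosDenominators (lamq q) (boundaryWord q) ∧
      tailValue (lamq q) (boundaryWord q) = -(lamq q / 2) := by
  have hpos := sinRatio_hQ_add_one_pos hq
  have hhalf : sinRatio q (hQ q) / sinRatio q (hQ q + 1) = lamq q / 2 := by
    rw [div_eq_iff hpos.ne']
    linarith [sinRatio_add_two (q := q) (hQ q), sinRatio_hQ_add_two_of_even hq he]
  rw [boundaryWord, if_pos he, ← hhalf]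
  exact tailValue_replicate_one hq (by have := eq_two_mul_hQ_add_two hq he; omega)

lemma tailValue_boundaryWord_of_odd (hq : 3 ≤ q) (ho : ¬ Even q) :
    HasPosDenominators (lamq q) (boundaryWord q) ∧
      tailValue (lamq q) (boundaryWord q) = -(lamq q / 2) := by
  have hlam := lamq_pos hq
  have hpos := sinRatio_hQ_add_one_pos hq
  have hqh := eq_two_mul_hQ_add_three hq ho
  have hsh := sinRatio_hQ_of_odd hq ho
  obtain ⟨hden, hones⟩ := tailValue_replicate_one (q := q) (k := hQ q) hq (by omega)
  have hden_two : ((2 : ℤ) : ℝ) * lamq q + tailValue (lamq q) (List.replicate (hQ q) 1) =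
      lamq q + 1 := by
    rw [hones, hsh, mul_div_cancel_right₀ _ hpos.ne']
    push_cast
    ring
  have hF : HasPosDenominators (lamq q) (2 :: List.replicate (hQ q) 1) :=
    ⟨by rw [hden_two]; linarith, hden⟩
  have hsum := tailValue_replicate_one_append (k := hQ q)
    (r := fun i => sinRatio q i + sinRatio q (i + 1))
    (fun i => by simp only [sinRatio_add_two]; ring)
    (fun i hi => add_pos (sinRatio_pos hq i.succ_pos (by omega))
      (sinRatio_pos hq i.succ.succ_pos (by omega))) hF
    (by rw [tailValue, hden_two]
        simp [sinRatio_zero, sinRatio_one hq, sinRatio_two hq, add_comm])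
  have hhalf : (sinRatio q (hQ q) + sinRatio q (hQ q + 1)) /
      (sinRatio q (hQ q + 1) + sinRatio q (hQ q + 1 + 1)) = lamq q / 2 := by
    rw [sinRatio_hQ_add_two_of_odd hq ho, hsh, div_eq_iff (by linarith)]
    ring
  rw [boundaryWord, if_neg ho, ← hhalf]
  exact hsum

lemma tailValue_boundaryWord (hq : 3 ≤ q) :
    HasPosDenominators (lamq q) (boundaryWord q) ∧
      tailValue (lamq q) (boundaryWord q) = -(lamq q / 2) :=
  (em (Even q)).elim (tailValue_boundaryWord_of_even hq) (tailValue_boundaryWord_of_odd hq)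

lemma RegularList.not_prefix {B : List ℤ} (hL : RegularList q L) (hB : IsForbidden q B) :
    ¬ B <+: L := fun h => hL B h.isInfix hB

lemma isForbidden_replicate_succ : IsForbidden q (List.replicate (hQ q + 1) 1) :=
  ⟨1, .inl rfl, .inl rfl⟩

lemma isForbidden_of_even {m : ℤ} (he : Even q) (hm : 1 ≤ m) :
    IsForbidden q (List.replicate (hQ q) 1 ++ [m]) :=
  ⟨1, .inl rfl, .inr (by rw [if_pos he]; exact ⟨m, hm, by simp⟩)⟩

lemma isForbidden_of_odd {m : ℤ} (ho : ¬ Even q) (hm : 1 ≤ m) :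
    IsForbidden q (List.replicate (hQ q) 1 ++ 2 :: (List.replicate (hQ q) 1 ++ [m])) :=
  ⟨1, .inl rfl, .inr (by rw [if_neg ho]; exact ⟨m, hm, by simp⟩)⟩

lemma RegularList.digitLE_boundaryWord (hL : RegularList q L) (h0 : 0 ∉ L) :
    DigitLE (boundaryWord q) L := by
  by_contra h
  rw [boundaryWord] at h
  split_ifs at h with he
  · obtain ⟨L', rfl, hL'⟩ := exists_eq_replicate_append_of_not_digitLE (F := []) h0
      (by simpa using h)
    obtain ⟨m, L'', hm, rfl⟩ := exists_eq_cons_of_not_digitLE_nil (by simp_all) hL'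
    exact hL.not_prefix (isForbidden_of_even he hm) ⟨L'', by simp⟩
  · obtain ⟨L', rfl, hL'⟩ := exists_eq_replicate_append_of_not_digitLE h0 h
    cases L' with
    | nil => exact hL' trivial
    | cons a L' =>
      simp only [DigitLE, not_or, not_lt] at hL'
      have ha0 : a ≠ 0 := by
        rintro rfl
        simp at h0
      obtain rfl | rfl : a = 1 ∨ a = 2 := by omega
      · exact hL.not_prefix isForbidden_replicate_succ ⟨L', by simp [List.replicate_succ']⟩
      · obtain ⟨L'', rfl, hL''⟩ := exists_eq_replicate_append_of_not_digitLE (F := [])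
          (L := L') (by simp_all) (by simpa using hL'.2.2)
        obtain ⟨m, L₃, hm, rfl⟩ := exists_eq_cons_of_not_digitLE_nil (by simp_all) hL''
        exact hL.not_prefix (isForbidden_of_odd he hm) ⟨L₃, by simp⟩

lemma IsForbidden.map_neg {B : List ℤ} (hB : IsForbidden q B) : IsForbidden q (B.map Neg.neg) := by
  obtain ⟨ε, hε, h⟩ := hB
  refine ⟨-ε, by omega, h.imp (fun h => by simp [h]) fun h => ?_⟩
  split_ifs at h ⊢ <;> exact h.imp fun m hm => ⟨hm.1, by simp [hm.2]⟩

lemma RegularList.map_neg (hL : RegularList q L) : RegularList q (L.map Neg.neg) :=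
  fun B hB hforb => hL (B.map Neg.neg) (by simpa using hB.map Neg.neg) hforb.map_neg

lemma RegularList.neg_half_le_tailValue (hq : 3 ≤ q) (hL : RegularList q L) (h0 : 0 ∉ L)
    (htail : ∀ v, v <:+ L.tail → |tailValue (lamq q) v| ≤ lamq q / 2) :
    -(lamq q / 2) ≤ tailValue (lamq q) L := by
  obtain ⟨hden, hval⟩ := tailValue_boundaryWord hq
  exact hval ▸ (hL.digitLE_boundaryWord h0).tailValue_le (lamq_pos hq) hden htail

lemma RegularList.abs_tailValue_le (hq : 3 ≤ q) (hL : RegularList q L) (h0 : 0 ∉ L) :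
    |tailValue (lamq q) L| ≤ lamq q / 2 := by
  suffices ∀ v, v <:+ L → |tailValue (lamq q) v| ≤ lamq q / 2 from this L List.suffix_rfl
  induction L with
  | nil =>
    intro v hv
    simpa [List.suffix_nil.1 hv, tailValue] using (half_pos (lamq_pos hq)).le
  | cons a L ih =>
    have htail := ih (fun B hB => hL B (hB.trans (L.suffix_cons a).isInfix))
      fun h => h0 (List.mem_cons_of_mem a h)
    intro v hv
    obtain rfl | hv := List.suffix_cons_iff.1 hv
    · have hneg := hL.map_neg.neg_half_le_tailValue hq (by simpa [eq_comm] using h0) fun v hv => by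
        rw [← abs_neg, ← tailValue_map_neg]
        exact htail _ (by simpa using hv.map Neg.neg)
      rw [tailValue_map_neg] at hneg
      exact abs_le.2 ⟨hL.neg_half_le_tailValue hq h0 htail, neg_le_neg_iff.1 hneg⟩
    · exact htail v hv

end RegularWords

/-- The finite word `A 0, …, A (n - 1)`. -/
def digitPrefix (A : ℕ → ℤ) (n : ℕ) : List ℤ := List.ofFn fun j : Fin n => A j

section RegularSequences

variable {q : ℕ} {lam x : ℝ} {A : ℕ → ℤ}

lemma digitPrefix_succ (A : ℕ → ℤ) (n : ℕ) :
    digitPrefix A (n + 1) = A 0 :: digitPrefix (fun i => A (i + 1)) n := by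
  simp [digitPrefix, List.ofFn_succ]

lemma RegularSeq.tail (hA : RegularSeq q A) : RegularSeq q (fun i => A (i + 1)) := fun l len => by
  simpa only [add_right_comm] using hA (l + 1) len

lemma RegularSeq.regularList_digitPrefix (hA : RegularSeq q A) (n : ℕ) :
    RegularList q (digitPrefix A n) := by
  rintro B ⟨s, t, h⟩
  have : s.length + B.length + t.length = n := by
    simpa [digitPrefix, add_assoc] using congrArg List.length h
  have hB : B = List.ofFn fun j : Fin B.length => A (s.length + j) := by
    refine List.ext_getElem (by simp) fun i hi _ => ?_
    have hget : (s ++ B ++ t)[s.length + i]'(by simp; omega) = B[i] := by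
      simp [hi]
    rw [← hget]
    simp [h, digitPrefix]
  exact hB ▸ hA _ _

lemma RegularSeq.abs_tailValue_digitPrefix_le (hq : 3 ≤ q) (hA : RegularSeq q A)
    (h0 : ∀ i, A i ≠ 0) (n : ℕ) : |tailValue (lamq q) (digitPrefix A n)| ≤ lamq q / 2 :=
  (hA.regularList_digitPrefix n).abs_tailValue_le hq (by simp [digitPrefix, h0])

lemma RegularSeq.add_tailValue_ne_zero (hq : 3 ≤ q) (hA : RegularSeq q A) (h0 : ∀ i, A i ≠ 0)
    {a : ℤ} (ha : a ≠ 0) (n : ℕ) : a * lamq q + tailValue (lamq q) (digitPrefix A n) ≠ 0 := by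
  intro h
  have hle := hA.abs_tailValue_digitPrefix_le hq h0 n
  have habs : 1 ≤ |(a : ℝ)| := by exact_mod_cast Int.one_le_abs ha
  rw [eq_neg_of_add_eq_zero_right h, abs_neg, abs_mul, abs_of_pos (lamq_pos hq)] at hle
  nlinarith [lamq_pos hq]

lemma cfP_succ (A : ℕ → ℤ) (n : ℕ) : cfP lam A (n + 1) =
    A 0 * lam * cfP lam (fun i => A (i + 1)) n - cfQ lam (fun i => A (i + 1)) n := by
  induction n using Nat.twoStepInduction with
  | zero => simp [cfP, cfQ]; ring
  | one => simp [cfP, cfQ]; ring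
  | more n ih ih' => rw [cfP, ih, ih', cfP, cfQ]; ring

lemma cfQ_succ (A : ℕ → ℤ) (n : ℕ) : cfQ lam A (n + 1) = cfP lam (fun i => A (i + 1)) n := by
  induction n using Nat.twoStepInduction with
  | zero => rfl
  | one => rfl
  | more n ih ih' => rw [cfQ, ih, ih', cfP]

lemma RegularSeq.convergent_eq (hq : 3 ≤ q) (hA : RegularSeq q (fun i => A (i + 1)))
    (h0 : ∀ i, A (i + 1) ≠ 0) (n : ℕ) : cfQ (lamq q) A n ≠ 0 ∧ cfP (lamq q) A n / cfQ (lamq q) A n =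
      A 0 * lamq q + tailValue (lamq q) (digitPrefix (fun i => A (i + 1)) n) := by
  induction n generalizing A with
  | zero => simp [cfP, cfQ, digitPrefix, tailValue]
  | succ n ih =>
    obtain ⟨hQ, hPQ⟩ := ih (A := fun i => A (i + 1)) hA.tail fun i => h0 (i + 1)
    have hden := hA.tail.add_tailValue_ne_zero hq (A := fun i => A (i + 2))
      (fun i => h0 (i + 1)) (h0 0) n
    rw [div_eq_iff hQ] at hPQ
    rw [cfP_succ, cfQ_succ, digitPrefix_succ, tailValue, hPQ]
    refine ⟨mul_ne_zero hden hQ, ?_⟩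
    rw [sub_div, mul_div_cancel_right₀ _ (mul_ne_zero hden hQ), div_mul_cancel_right₀ hQ,
      sub_eq_add_neg]

lemma ne_zero_of_tendsto_inv {w : ℕ → ℝ} {u M : ℝ} (hw : ∀ n, w n ≠ 0) (hM : ∀ n, |w n| ≤ M)
    (h : Tendsto (fun n => (w n)⁻¹) atTop (𝓝 u)) : u ≠ 0 := by
  have hone : 1 ≤ |u| * M := ge_of_tendsto (h.abs.mul_const M) <| .of_forall fun n =>
    calc (1 : ℝ) = |(w n)⁻¹| * |w n| := by rw [← abs_mul, inv_mul_cancel₀ (hw n), abs_one]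
      _ ≤ |(w n)⁻¹| * M := by gcongr; exact hM n
  rintro rfl
  norm_num at hone

lemma HasRegCF.tendsto_tailValue (hq : 3 ≤ q) (h : HasRegCF q x A) :
    Tendsto (fun n => tailValue (lamq q) (digitPrefix (fun i => A (i + 1)) n)) atTop
      (𝓝 (x - A 0 * lamq q)) := by
  obtain ⟨h0, hA, -, hlim⟩ := h
  simpa [(hA.convergent_eq hq h0 _).2] using hlim.sub_const (A 0 * lamq q)

lemma HasRegCF.abs_sub_le (hq : 3 ≤ q) (h : HasRegCF q x A) :
    |x - A 0 * lamq q| ≤ lamq q / 2 :=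
  le_of_tendsto (h.tendsto_tailValue hq).abs
    (.of_forall (h.2.1.abs_tailValue_digitPrefix_le hq h.1))

lemma HasRegCF.tail (hq : 3 ≤ q) (h : HasRegCF q x A) :
    x ≠ A 0 * lamq q ∧ HasRegCF q (A 0 * lamq q - x)⁻¹ (fun i => A (i + 1)) := by
  have hlim := ((tendsto_add_atTop_iff_nat 1).2 (h.tendsto_tailValue hq)).neg
  simp only [digitPrefix_succ, tailValue, neg_neg, neg_sub] at hlim
  obtain ⟨h0, hA, -⟩ := h
  have h0' : ∀ i, A (i + 1 + 1) ≠ 0 := fun i => h0 (i + 1)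
  have hne : A 0 * lamq q - x ≠ 0 :=
    ne_zero_of_tendsto_inv (hA.tail.add_tailValue_ne_zero hq h0' (h0 0)) (fun n =>
      (abs_add_le _ _).trans
        (add_le_add_right (hA.tail.abs_tailValue_digitPrefix_le hq h0' n) _)) hlim
  have hconv := RegularSeq.convergent_eq (A := fun i => A (i + 1)) hq hA.tail h0'
  refine ⟨(sub_ne_zero.1 hne).symm, h0', hA.tail, fun n => (hconv n).1, ?_⟩
  simpa only [inv_inv, (hconv _).2] using hlim.inv₀ hne

lemma HasRegCF.isNearestExpansion (hq : 3 ≤ q) (h : HasRegCF q x A) :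
    IsNearestExpansion (lamq q) x A := fun n => by
  induction n generalizing x A with
  | zero => exact ⟨h.abs_sub_le hq, (h.tail hq).1⟩
  | succ n ih =>
    rw [← completeQuotient_tail]
    exact ih (h.tail hq).2

end RegularSequences

section Classification

variable {q : ℕ} {x y : ℝ} {A B : ℕ → ℤ}

lemma TailRel.commonTail_or (h : TailRel q A B) : CommonTail A B ∨
    (CommonTail A (rho q) ∧ CommonTail B (fun i => -rho q i)) ∨
    (CommonTail A (fun i => -rho q i) ∧ CommonTail B (rho q)) := by
  obtain h | ⟨hA | hA, hB | hB⟩ := h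
  exacts [.inl h, .inl (hA.trans hB.symm), .inr (.inl ⟨hA, hB⟩), .inr (.inr ⟨hA, hB⟩),
    .inl (hA.trans hB.symm)]

lemma IsNearestExpansion.gqEquiv_iff (hq : 3 ≤ q) (hx : IsNearestExpansion (lamq q) x A)
    (hy : IsNearestExpansion (lamq q) y B) : GqEquiv q x y ↔ CommonTail A B ∨
      (CommonTail A (rho q) ∧ CommonTail B (fun i => -rho q i)) ∨
      (CommonTail A (fun i => -rho q i) ∧ CommonTail B (rho q)) := by
  constructor
  · intro h
    obtain ⟨B', hB', hAB⟩ := (hx.tailEquiv_of_gqEquiv hq h).1 A hx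
    rw [hB'.unique hq hy] at hAB
    exact hAB.commonTail_or
  · rintro (hAB | ⟨hA, hB⟩ | ⟨hA, hB⟩)
    · exact hx.gqEquiv_of_commonTail hq hy hAB
    · exact hx.gqEquiv_of_rho_neg_rho hq hy hA hB
    · exact (hy.gqEquiv_of_rho_neg_rho hq hx hB hA).symm

lemma HasRegCF.unique (hq : 3 ≤ q) (hA : HasRegCF q x A) (hB : HasRegCF q x B) : A = B :=
  (hA.isNearestExpansion hq).unique hq (hB.isNearestExpansion hq)

end Classification

/-- Two points with infinite regular `λ_q`-CF's are `G_q`-equivalent iff their expansions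
have a common tail, or one has an expansion with the tail of `ρ_q` while the other has an
expansion with the tail of `-ρ_q`. -/
theorem stmt6 (q : ℕ) (hq : 3 ≤ q) (x y : ℝ)
    (hx : ∃ A, HasRegCF q x A) (hy : ∃ B, HasRegCF q y B) :
    GqEquiv q x y ↔
      ((∃ A B, HasRegCF q x A ∧ HasRegCF q y B ∧ CommonTail A B) ∨
        (∃ A B, HasRegCF q x A ∧ HasRegCF q y B ∧
          CommonTail A (rho q) ∧ CommonTail B (fun i => -(rho q i))) ∨
        (∃ A B, HasRegCF q x A ∧ HasRegCF q y B ∧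
          CommonTail A (fun i => -(rho q i)) ∧ CommonTail B (rho q))) := by
  obtain ⟨A, hA⟩ := hx
  obtain ⟨B, hB⟩ := hy
  have huniq : ∀ P : (ℕ → ℤ) → (ℕ → ℤ) → Prop,
      (∃ A B, HasRegCF q x A ∧ HasRegCF q y B ∧ P A B) ↔ P A B := fun P =>
    ⟨fun ⟨A', B', hA', hB', h⟩ => hA.unique hq hA' ▸ hB.unique hq hB' ▸ h,
      fun h => ⟨A, B, hA, hB, h⟩⟩
  rw [(hA.isNearestExpansion hq).gqEquiv_iff hq (hB.isNearestExpansion hq), huniq CommonTail,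
    huniq fun A B => CommonTail A (rho q) ∧ CommonTail B (fun i => -rho q i),
    huniq fun A B => CommonTail A (fun i => -rho q i) ∧ CommonTail B (rho q)]
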